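/- Let γ0, γ1 ∈ ℝ satisfy −1 < γ0, γ1 < 1 and γ1 > γ0 − 2 (the open asymptotic-data triangle). Suppose (w0, w1) is a smooth solution of the radial tt* system (case 4a) on (0, ∞) such that w0(r) → 0 and w1(r) → 0 as r → ∞ and 2·w0(r)/ln r → γ0 and 2·w1(r)/ln r → γ1 as r → 0⁺. Then the Stokes asymptotics at infinity hold: (w0(r) + w1(r))·2^{3/4}·(π r)^{1/2}·e^{2√2 r} → −s1 and (w0(r) − w1(r))·2^{3/2}·(π r)^{1/2}·e^{4 r} → s2 as r → ∞, where (s1, s2) are given by the connection formula s1 = −2 cos(π(γ0+1)/4) − 2 cos(π(γ1+3)/4), s2 = −2 − 4 cos(π(γ0+1)/4)·cos(π(γ1+3)/4). -/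

import Mathlib

open Real Filter

/-- The radial tt* system (case 4a). -/
def IsRadialTTStar (w0 w1 : ℝ → ℝ) : Prop :=
  ∀ r : ℝ, 0 < r →
    (1/2) * deriv (deriv w0) r + (1/(2*r)) * deriv w0 r
        = Real.exp (4 * w0 r) - Real.exp (2 * w1 r - 2 * w0 r) ∧
    (1/2) * deriv (deriv w1) r + (1/(2*r)) * deriv w1 r
        = Real.exp (2 * w1 r - 2 * w0 r) - Real.exp (-(4 * w1 r))

/-!
The tt* equations are the zero curvature condition of an isomonodromic connection, written here
on the circle of radius `x` in terms of an angle. Transporting along a quarter turn and composing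
with the rotational symmetry of the connection gives a holonomy whose conjugacy class does not
depend on `x`. As `x → 0` the connection tends to a constant skew matrix determined by `γ₀` and
`γ₁`, so the traces of the holonomy and of its square are expressed through
`cos (π (γ₀ + 1) / 4)` and `cos (π (γ₁ + 3) / 4)`.

As `x → ∞`, the linearised equations give `w₀ + w₁ ∼ A r^(-1/2) exp (-2√2 r)` and
`w₀ - w₁ ∼ B r^(-1/2) exp (-4 r)`. In a frame diagonalising the connection of the zero solution,
gauging away the diagonal part turns the remaining terms into boundary layers of width `x^(-1/2)`,
which Laplace's method evaluates to multiples of `A` and `B`. Comparing the two limits of the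
traces yields `A` and `B`.
-/

namespace RadialTTStar

open Set Topology Asymptotics

/-! ### Asymptotics at infinity -/

/-- `z` is a radial function on the punctured plane with derivative `z'` and Laplacian
`z'' + z' / r = f`; the second derivative is eliminated in favour of `f`. -/
structure HasRadialLaplacian (z z' f : ℝ → ℝ) : Prop where
  hasDerivAt : ∀ r > 0, HasDerivAt z (z' r) r
  hasDerivAt_deriv : ∀ r > 0, HasDerivAt z' (f r - z' r / r) r

namespace HasRadialLaplacian

variable {y y' g z z' f : ℝ → ℝ}

lemma add (hy : HasRadialLaplacian y y' g) (hz : HasRadialLaplacian z z' f) :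
    HasRadialLaplacian (fun r => y r + z r) (fun r => y' r + z' r) (fun r => g r + f r) where
  hasDerivAt r hr := (hy.hasDerivAt r hr).add (hz.hasDerivAt r hr)
  hasDerivAt_deriv r hr := ((hy.hasDerivAt_deriv r hr).add (hz.hasDerivAt_deriv r hr)).congr_deriv
    (by ring)

lemma neg (hz : HasRadialLaplacian z z' f) :
    HasRadialLaplacian (fun r => -z r) (fun r => -z' r) (fun r => -f r) where
  hasDerivAt r hr := (hz.hasDerivAt r hr).neg
  hasDerivAt_deriv r hr := (hz.hasDerivAt_deriv r hr).neg.congr_deriv (by ring)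

lemma sub (hy : HasRadialLaplacian y y' g) (hz : HasRadialLaplacian z z' f) :
    HasRadialLaplacian (fun r => y r - z r) (fun r => y' r - z' r) (fun r => g r - f r) := by
  simpa only [sub_eq_add_neg] using hy.add hz.neg

lemma hasDerivAt_id_mul_deriv (hz : HasRadialLaplacian z z' f) {r : ℝ} (hr : 0 < r) :
    HasDerivAt (fun r => r * z' r) (r * f r) r := by
  refine ((hasDerivAt_id r).mul (hz.hasDerivAt_deriv r hr)).congr_deriv ?_
  simp only [id]
  field_simp
  ring

end HasRadialLaplacian

lemma not_isLocalMax_of_deriv_deriv_pos {f f' : ℝ → ℝ} {x c : ℝ}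
    (hf : ∀ᶠ y in 𝓝 x, HasDerivAt f (f' y) y) (hf' : HasDerivAt f' c x) (hc : 0 < c) :
    ¬ IsLocalMax f x := by
  intro hmax
  have hdd : deriv (deriv f) x = c := by
    rw [EventuallyEq.deriv_eq (hf.mono fun y hy => hy.deriv), hf'.deriv]
  have hmin : IsLocalMin f x := isLocalMin_of_deriv_deriv_pos (hdd.symm ▸ hc)
    hmax.deriv_eq_zero hf.self_of_nhds.continuousAt
  have hconst : f =ᶠ[𝓝 x] fun _ => f x := by
    filter_upwards [hmax, hmin] with y h₁ h₂ using le_antisymm h₁ h₂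
  rw [hconst.deriv.deriv_eq] at hdd
  simp [hc.ne] at hdd

lemma nonpos_of_deriv_deriv_pos {f f' f'' : ℝ → ℝ} {R : ℝ}
    (hf : ∀ r ≥ R, HasDerivAt f (f' r) r) (hf' : ∀ r ≥ R, HasDerivAt f' (f'' r) r)
    (hpos : ∀ r ≥ R, 0 < f r → f' r = 0 → 0 < f'' r) (hR : f R ≤ 0)
    (hlim : Tendsto f atTop (𝓝 0)) {r : ℝ} (hr : R ≤ r) : f r ≤ 0 := by
  by_contra! hfr
  obtain ⟨S, hfS, hrS⟩ := ((hlim.eventually_lt_const hfr).and (eventually_ge_atTop r)).exists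
  obtain ⟨m, hm, hmax⟩ := isCompact_Icc.exists_isMaxOn ⟨r, hr, hrS⟩
    (fun t ht => (hf t ht.1).continuousAt.continuousWithinAt : ContinuousOn f (Icc R S))
  have hrm : f r ≤ f m := hmax ⟨hr, hrS⟩
  have hRm : R < m := hm.1.lt_of_ne (by rintro rfl; linarith)
  have hmS : m < S := hm.2.lt_of_ne (by rintro rfl; linarith)
  have hloc : IsLocalMax f m := hmax.isLocalMax (Icc_mem_nhds hRm hmS)
  have hev : ∀ᶠ t in 𝓝 m, HasDerivAt f (f' t) t := by
    filter_upwards [Ioi_mem_nhds hRm] with t ht using hf t (le_of_lt ht)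
  exact not_isLocalMax_of_deriv_deriv_pos hev (hf' m hm.1)
    (hpos m hm.1 (by linarith) (hloc.hasDerivAt_eq_zero (hf m hm.1))) hloc

lemma hasDerivAt_exp_mul (k r : ℝ) : HasDerivAt (fun r => exp (k * r)) (k * exp (k * r)) r := by
  simpa [mul_comm] using ((hasDerivAt_id r).const_mul k).exp

lemma tendsto_exp_neg_mul_atTop {k : ℝ} (hk : 0 < k) :
    Tendsto (fun r => exp (-k * r)) atTop (𝓝 0) :=
  tendsto_exp_atBot.comp (tendsto_id.const_mul_atTop_of_neg (neg_lt_zero.2 hk))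

namespace HasRadialLaplacian

variable {z z' f : ℝ → ℝ} {κ D k : ℝ}

-- `C * exp (-κ r)` has Laplacian `(κ² - κ / r) * C * exp (-κ r)`, so it is a barrier for `z`.
lemma eventually_le_exp_neg (hz : HasRadialLaplacian z z' f) (hκ : 0 < κ)
    (hlim : Tendsto z atTop (𝓝 0))
    (hf : ∀ᶠ r in atTop, D * exp (-κ * r) < z r → (κ ^ 2 - κ / r) * z r ≤ f r) :
    ∃ C, ∀ᶠ r in atTop, z r ≤ C * exp (-κ * r) := by
  obtain ⟨R, hR⟩ := eventually_atTop.1 (hf.and (eventually_gt_atTop κ⁻¹))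
  have hpos : ∀ r ≥ R, 0 < r := fun r hr => (inv_pos.2 hκ).trans (hR r hr).2
  have hcoef : ∀ r ≥ R, 0 < κ ^ 2 - κ / r := fun r hr => by
    have hr0 := hpos r hr
    have h1 : 1 < κ * r := by simpa [hκ.ne'] using mul_lt_mul_of_pos_left (hR r hr).2 hκ
    rw [sub_pos, div_lt_iff₀ hr0]
    nlinarith
  set C := max (max D 1) (z R * exp (κ * R))
  have hexp : ∀ r, HasDerivAt (fun r => C * exp (-κ * r)) (C * (-κ * exp (-κ * r))) r :=
    fun r => (hasDerivAt_exp_mul (-κ) r).const_mul C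
  refine ⟨C, (eventually_ge_atTop R).mono fun r hr => sub_nonpos.1 ?_⟩
  refine nonpos_of_deriv_deriv_pos (f := fun r => z r - C * exp (-κ * r))
    (fun r hr => (hz.hasDerivAt r (hpos r hr)).sub (hexp r))
    (fun r hr => (hz.hasDerivAt_deriv r (hpos r hr)).sub
      (((hasDerivAt_exp_mul (-κ) r).const_mul (-κ)).const_mul C)) ?_ ?_ ?_ hr
  · intro r hr hgt hcrit
    have hD : D * exp (-κ * r) ≤ C * exp (-κ * r) :=
      mul_le_mul_of_nonneg_right ((le_max_left D 1).trans (le_max_left _ _)) (exp_pos _).le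
    have hfr := (hR r hr).1 (by linarith)
    have hz' : z' r = -(κ * (C * exp (-κ * r))) := by linarith
    have hlower := mul_pos (hcoef r hr) hgt
    rw [hz']
    linear_combination hlower + hfr
  · have hCR : z R * exp (κ * R) ≤ C := le_max_right _ _
    have := mul_le_mul_of_nonneg_right hCR (exp_pos (-κ * R)).le
    rw [mul_assoc, ← exp_add, neg_mul, add_neg_cancel, exp_zero, mul_one] at this
    simpa using this
  · simpa using hlim.sub ((tendsto_exp_neg_mul_atTop hκ).const_mul C)

lemma isBigO_exp_neg (hz : HasRadialLaplacian z z' f) (hκ : 0 < κ)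
    (hlim : Tendsto z atTop (𝓝 0)) (hD : 0 ≤ D)
    (hf : ∀ᶠ r in atTop, D * exp (-κ * r) < |z r| → (κ ^ 2 - κ / r) * z r ^ 2 ≤ z r * f r) :
    z =O[atTop] fun r => exp (-κ * r) := by
  obtain ⟨C₁, h₁⟩ := hz.eventually_le_exp_neg (D := D) hκ hlim <| hf.mono fun r h hr => by
    have hr0 : 0 < z r := (by positivity : 0 ≤ D * exp (-κ * r)).trans_lt hr
    exact le_of_mul_le_mul_left (by linarith [h (hr.trans_le (le_abs_self _))]) hr0
  obtain ⟨C₂, h₂⟩ := hz.neg.eventually_le_exp_neg (D := D) hκ (by simpa using hlim.neg) <|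
    hf.mono fun r h hr => by
    have hr0 : 0 < -z r := (by positivity : 0 ≤ D * exp (-κ * r)).trans_lt hr
    exact le_of_mul_le_mul_left (by linarith [h (hr.trans_le (neg_le_abs _))]) hr0
  refine IsBigO.of_bound (max C₁ C₂) ?_
  filter_upwards [h₁, h₂] with r h₁ h₂
  rw [norm_eq_abs, norm_of_nonneg (exp_pos _).le]
  exact abs_le'.2 ⟨h₁.trans (by gcongr; exact le_max_left _ _),
    h₂.trans (by gcongr; exact le_max_right _ _)⟩

end HasRadialLaplacian

lemma exists_tendsto_of_hasDerivAt_isBigO_rpow {M M' : ℝ → ℝ} {a : ℝ} (ha : 1 < a)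
    (hM : ∀ᶠ r in atTop, HasDerivAt M (M' r) r) (hM' : M' =O[atTop] fun r => r ^ (-a)) :
    ∃ L, Tendsto M atTop (𝓝 L) := by
  have heq : deriv M =ᶠ[atTop] M' := hM.mono fun r hr => hr.deriv
  have hint : MeasureTheory.IntegrableAtFilter (deriv M) atTop := by
    refine (hM'.congr' heq.symm .rfl).integrableAtFilter
      (measurable_deriv M).stronglyMeasurable.stronglyMeasurableAtFilter ?_
    exact ⟨Ioi 1, Ioi_mem_atTop 1, integrableOn_Ioi_rpow_of_lt (by linarith) one_pos⟩
  obtain ⟨s, hs, hint⟩ := hint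
  obtain ⟨R, hR⟩ := eventually_atTop.1 (hM.and hs)
  exact ⟨_, MeasureTheory.tendsto_limUnder_of_hasDerivAt_of_integrableOn_Ioi (a := R)
    (fun r hr => (hR r (le_of_lt hr)).1.differentiableAt.hasDerivAt)
    (hint.mono_set fun r hr => (hR r (le_of_lt hr)).2)⟩

-- `M = e^{kr} (y' - k y)` has derivative `e^{kr} f`, hence converges; then `e^{kr} y` is the
-- quotient of `e^{-kr} y` by `e^{-2kr}`, whose derivatives have quotient `-M / (2k)`.
lemma exists_tendsto_exp_mul_of_deriv_deriv_eq {y y' f : ℝ → ℝ} {k a : ℝ} (hk : 0 < k)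
    (ha : 1 < a) (hy : ∀ᶠ r in atTop, HasDerivAt y (y' r) r)
    (hy' : ∀ᶠ r in atTop, HasDerivAt y' (k ^ 2 * y r + f r) r) (hlim : Tendsto y atTop (𝓝 0))
    (hf : (fun r => exp (k * r) * f r) =O[atTop] fun r => r ^ (-a)) :
    ∃ A, Tendsto (fun r => exp (k * r) * y r) atTop (𝓝 A) ∧
      Tendsto (fun r => exp (k * r) * y' r) atTop (𝓝 (-k * A)) := by
  obtain ⟨L, hL⟩ := exists_tendsto_of_hasDerivAt_isBigO_rpow ha
    (M := fun r => exp (k * r) * (y' r - k * y r)) (by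
      filter_upwards [hy, hy'] with r hy hy'
      exact ((hasDerivAt_exp_mul k r).mul (hy'.sub (hy.const_mul k))).congr_deriv
        (by simp only [Pi.sub_apply]; ring)) hf
  have hdiv : Tendsto (fun r => exp (-k * r) * y r / exp (-(2 * k) * r)) atTop
      (𝓝 (-(L / (2 * k)))) := by
    refine HasDerivAt.lhopital_zero_atTop
      (f' := fun r => exp (-k * r) * (y' r - k * y r))
      (g' := fun r => -(2 * k) * exp (-(2 * k) * r)) ?_ (.of_forall fun r => hasDerivAt_exp_mul _ r)
      (.of_forall fun r => by simp [hk.ne']) ?_ (tendsto_exp_neg_mul_atTop (by positivity)) ?_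
    · filter_upwards [hy] with r hy
      exact ((hasDerivAt_exp_mul (-k) r).mul hy).congr_deriv (by ring)
    · simpa using (tendsto_exp_neg_mul_atTop hk).mul hlim
    · refine (hL.div_const (2 * k)).neg.congr fun r => ?_
      have : exp (-k * r) = exp (k * r) * exp (-(2 * k) * r) := by rw [← exp_add]; ring_nf
      rw [this]
      field_simp
  have hA : Tendsto (fun r => exp (k * r) * y r) atTop (𝓝 (-(L / (2 * k)))) := by
    refine hdiv.congr fun r => ?_
    have : exp (-k * r) = exp (k * r) * exp (-(2 * k) * r) := by rw [← exp_add]; ring_nf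
    rw [this]
    field_simp
  refine ⟨_, hA, ((hL.add (hA.const_mul k)).congr fun r => by ring).trans (le_of_eq ?_)⟩
  congr 1
  field_simp
  ring

lemma isBigO_exp_neg_mul_exp_neg {f g : ℝ → ℝ} {a b c : ℝ} (h : c ≤ a + b)
    (hf : f =O[atTop] fun r => exp (-a * r)) (hg : g =O[atTop] fun r => exp (-b * r)) :
    (fun r => f r * g r) =O[atTop] fun r => exp (-c * r) := by
  refine (hf.mul hg).trans (IsBigO.of_norm_eventuallyLE ?_)
  filter_upwards [eventually_ge_atTop 0] with r hr
  rw [← exp_add, norm_of_nonneg (exp_pos _).le]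
  exact exp_le_exp.2 (by nlinarith)

lemma isBigO_exp_mul_rpow {f : ℝ → ℝ} {k a : ℝ} (h : k < a) (s : ℝ)
    (hf : f =O[atTop] fun r => exp (-a * r)) :
    (fun r => exp (k * r) * f r) =O[atTop] fun r => r ^ s := by
  refine (((isBigO_refl (fun r => exp (k * r)) atTop).mul hf).congr_right fun r => ?_).trans
    (isLittleO_exp_neg_mul_rpow_atTop (sub_pos.2 h) s).isBigO
  rw [← exp_add]
  ring_nf

namespace HasRadialLaplacian

variable {z z' f : ℝ → ℝ} {k : ℝ}

lemma hasDerivAt_sqrt_mul (hz : HasRadialLaplacian z z' f) {r : ℝ} (hr : 0 < r) :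
    HasDerivAt (fun r => √r * z r) (√r * z' r + z r / (2 * √r)) r := by
  refine ((hasDerivAt_sqrt hr.ne').mul (hz.hasDerivAt r hr)).congr_deriv ?_
  ring

lemma hasDerivAt_deriv_sqrt_mul (hz : HasRadialLaplacian z z' f) {r : ℝ} (hr : 0 < r) :
    HasDerivAt (fun r => √r * z' r + z r / (2 * √r)) (√r * f r - √r * z r / (4 * r ^ 2)) r := by
  have hs := hasDerivAt_sqrt hr.ne'
  have hs0 : 0 < √r := sqrt_pos.2 hr
  refine ((hs.mul (hz.hasDerivAt_deriv r hr)).add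
    ((hz.hasDerivAt r hr).div (hs.const_mul 2) (by positivity))).congr_deriv ?_
  have hsq : r = √r ^ 2 := (sq_sqrt hr.le).symm
  generalize √r = q at *
  subst hsq
  field_simp
  ring

lemma exists_tendsto_sqrt_mul_exp_mul (hz : HasRadialLaplacian z z' f) (hk : 0 < k)
    (hzO : z =O[atTop] fun r => exp (-k * r))
    (hf : (fun r => exp (k * r) * (f r - k ^ 2 * z r)) =O[atTop] fun r : ℝ => r ^ (-2 : ℝ)) :
    ∃ A, Tendsto (fun r => √r * exp (k * r) * z r) atTop (𝓝 A) ∧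
      Tendsto (fun r => √r * exp (k * r) * z' r) atTop (𝓝 (-k * A)) := by
  have hzexp : (fun r => exp (k * r) * z r) =O[atTop] fun _ => (1 : ℝ) := by
    refine ((isBigO_refl (fun r => exp (k * r)) atTop).mul hzO).congr_right fun r => ?_
    simp [← exp_add]
  have hsqrt : Tendsto (fun r => √r * z r) atTop (𝓝 0) := by
    have hdecay : Tendsto (fun r => √r * exp (-k * r)) atTop (𝓝 0) := by
      simpa [sqrt_eq_rpow] using tendsto_rpow_mul_exp_neg_mul_atTop_nhds_zero (1 / 2) k hk
    exact ((isBigO_refl (fun r => √r) atTop).mul hzO).trans_tendsto hdecay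
  have hforce : (fun r => exp (k * r) * (√r * (f r - k ^ 2 * z r) - √r * z r / (4 * r ^ 2)))
      =O[atTop] fun r : ℝ => r ^ (-(3 / 2) : ℝ) := by
    have hsum : (fun r => exp (k * r) * (f r - k ^ 2 * z r) - exp (k * r) * z r * (4 * r ^ 2)⁻¹)
        =O[atTop] fun r : ℝ => r ^ (-2 : ℝ) := by
      refine hf.sub ((hzexp.mul (IsBigO.of_bound 1 ?_)).congr_right fun r => one_mul _)
      filter_upwards [eventually_gt_atTop 0] with r hr
      rw [rpow_neg hr.le, rpow_two, one_mul, norm_of_nonneg (by positivity),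
        norm_of_nonneg (by positivity)]
      gcongr
      nlinarith
    refine (((isBigO_refl (fun r => √r) atTop).mul hsum).congr_left fun r => ?_).trans
      (EventuallyEq.isBigO ?_)
    · ring
    · filter_upwards [eventually_gt_atTop 0] with r hr
      rw [sqrt_eq_rpow, ← rpow_add hr]
      norm_num
  obtain ⟨A, hA, hA'⟩ := exists_tendsto_exp_mul_of_deriv_deriv_eq hk (by norm_num)
    ((eventually_gt_atTop 0).mono fun r hr => hz.hasDerivAt_sqrt_mul hr)
    ((eventually_gt_atTop 0).mono fun r hr =>
      (hz.hasDerivAt_deriv_sqrt_mul hr).congr_deriv (by ring)) hsqrt hforce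
  refine ⟨A, hA.congr fun r => by ring, ?_⟩
  have hcorr := hA'.sub (hA.mul (tendsto_inv_atTop_zero.mul_const (1 / 2)))
  rw [zero_mul, mul_zero, sub_zero] at hcorr
  refine hcorr.congr' ((eventually_gt_atTop 0).mono fun r hr => ?_)
  have : 0 < √r := sqrt_pos.2 hr
  have hinv : r⁻¹ = (√r * √r)⁻¹ := by rw [mul_self_sqrt hr.le]
  simp only [hinv]
  field_simp
  ring

end HasRadialLaplacian

lemma sinh_isBigO_id : sinh =O[𝓝 0] fun s : ℝ => s := by
  simpa using (hasDerivAt_sinh 0).isBigO_sub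

lemma exp_sub_one_isBigO_id : (fun s => exp s - 1) =O[𝓝 0] fun s : ℝ => s := by
  simpa using (hasDerivAt_exp 0).isBigO_sub

lemma exp_sub_one_sub_id_isBigO_sq :
    (fun s => exp s - 1 - s) =O[𝓝 0] fun s : ℝ => s ^ 2 := by
  simpa [Finset.sum_range_succ, sub_sub] using exp_sub_sum_range_isBigO_pow 2

lemma exp_neg_sub_one_add_id_isBigO_sq :
    (fun s => exp (-s) - 1 + s) =O[𝓝 0] fun s : ℝ => s ^ 2 := by
  have hneg : Tendsto (fun s : ℝ => -s) (𝓝 0) (𝓝 0) := by simpa using tendsto_neg (0 : ℝ)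
  simpa [Function.comp_def] using exp_sub_one_sub_id_isBigO_sq.comp_tendsto hneg

lemma sinh_sub_id_isBigO_sq : (fun s => sinh s - s) =O[𝓝 0] fun s : ℝ => s ^ 2 :=
  ((exp_sub_one_sub_id_isBigO_sq.sub exp_neg_sub_one_add_id_isBigO_sq).const_mul_left
    (1 / 2)).congr_left fun s => by rw [sinh_eq]; ring

lemma cosh_sub_one_isBigO_sq : (fun s => cosh s - 1) =O[𝓝 0] fun s : ℝ => s ^ 2 :=
  ((exp_sub_one_sub_id_isBigO_sq.add exp_neg_sub_one_add_id_isBigO_sq).const_mul_left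
    (1 / 2)).congr_left fun s => by rw [cosh_eq]; ring

lemma sq_le_mul_sinh (s : ℝ) : s ^ 2 ≤ s * sinh s := by
  rcases le_total 0 s with hs | hs
  · nlinarith [self_le_sinh_iff.2 hs]
  · nlinarith [sinh_le_self_iff.2 hs]

/-- `(w₀, w₁)` solves the radial tt* system on `(0, ∞)` and has derivatives `(w₀', w₁')`. -/
structure IsSolution (w₀ w₀' w₁ w₁' : ℝ → ℝ) : Prop where
  laplacian₀ : HasRadialLaplacian w₀ w₀'
    fun r => 2 * (exp (4 * w₀ r) - exp (2 * w₁ r - 2 * w₀ r))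
  laplacian₁ : HasRadialLaplacian w₁ w₁'
    fun r => 2 * (exp (2 * w₁ r - 2 * w₀ r) - exp (-(4 * w₁ r)))

namespace IsSolution

variable {w₀ w₀' w₁ w₁' : ℝ → ℝ}

lemma laplacian_add (H : IsSolution w₀ w₀' w₁ w₁') :
    HasRadialLaplacian (fun r => w₀ r + w₁ r) (fun r => w₀' r + w₁' r)
      fun r => 4 * exp (2 * (w₀ r - w₁ r)) * sinh (2 * (w₀ r + w₁ r)) := by
  convert H.laplacian₀.add H.laplacian₁ using 2 with r
  have h₀ : exp (4 * w₀ r) = exp (2 * (w₀ r - w₁ r)) * exp (2 * (w₀ r + w₁ r)) := by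
    rw [← exp_add]; ring_nf
  have h₁ : exp (-(4 * w₁ r)) = exp (2 * (w₀ r - w₁ r)) * exp (-(2 * (w₀ r + w₁ r))) := by
    rw [← exp_add]; ring_nf
  rw [h₀, h₁, sinh_eq]
  ring

lemma laplacian_sub (H : IsSolution w₀ w₀' w₁ w₁') :
    HasRadialLaplacian (fun r => w₀ r - w₁ r) (fun r => w₀' r - w₁' r)
      fun r => 8 * sinh (2 * (w₀ r - w₁ r)) +
        4 * exp (2 * (w₀ r - w₁ r)) * (cosh (2 * (w₀ r + w₁ r)) - 1) := by
  convert H.laplacian₀.sub H.laplacian₁ using 2 with r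
  have h₀ : exp (4 * w₀ r) = exp (2 * (w₀ r - w₁ r)) * exp (2 * (w₀ r + w₁ r)) := by
    rw [← exp_add]; ring_nf
  have h₁ : exp (-(4 * w₁ r)) = exp (2 * (w₀ r - w₁ r)) * exp (-(2 * (w₀ r + w₁ r))) := by
    rw [← exp_add]; ring_nf
  have h₂ : exp (2 * w₁ r - 2 * w₀ r) = exp (-(2 * (w₀ r - w₁ r))) := by ring_nf
  rw [h₀, h₁, h₂, sinh_eq, cosh_eq]
  ring

end IsSolution

section SinhGordon

variable {u u' v v' : ℝ → ℝ} {κ : ℝ}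

lemma isBigO_exp_neg_of_laplacian_eq_sinh
    (hu : HasRadialLaplacian u u' fun r => 4 * exp (2 * v r) * sinh (2 * u r)) (hκ : 0 < κ)
    (hlim : Tendsto u atTop (𝓝 0)) (hv : ∀ᶠ r in atTop, κ ^ 2 - κ / r ≤ 8 * exp (2 * v r)) :
    u =O[atTop] fun r => exp (-κ * r) := by
  refine hu.isBigO_exp_neg hκ hlim le_rfl (hv.mono fun r hv _ => ?_)
  have hsinh := mul_le_mul_of_nonneg_left (sq_le_mul_sinh (2 * u r)) (exp_pos (2 * v r)).le
  have hcoef := mul_le_mul_of_nonneg_right hv (sq_nonneg (u r))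
  linarith

lemma isBigO_sq_exp_neg_of_isBigO {f : ℝ → ℝ} {F : ℝ → ℝ} {a : ℝ} (ha : 0 < a)
    (hf : f =O[atTop] fun r => exp (-a * r)) (hF : F =O[𝓝 0] fun s => s ^ 2) :
    (fun r => F (2 * f r)) =O[atTop] fun r => exp (-(2 * a) * r) := by
  have hf₂ := hf.const_mul_left 2
  refine (hF.comp_tendsto (hf₂.trans_tendsto (tendsto_exp_neg_mul_atTop ha))).trans ?_
  simpa only [Function.comp_def, sq] using
    isBigO_exp_neg_mul_exp_neg (show 2 * a ≤ a + a by linarith) hf₂ hf₂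

lemma isBigO_exp_neg_of_laplacian_eq_sinh_add
    (hv : HasRadialLaplacian v v' fun r => 8 * sinh (2 * v r) +
      4 * exp (2 * v r) * (cosh (2 * u r) - 1))
    (hvlim : Tendsto v atTop (𝓝 0)) (hu : u =O[atTop] fun r => exp (-(5 / 2) * r)) :
    v =O[atTop] fun r => exp (-4 * r) := by
  have hexp : (fun r => 4 * exp (2 * v r)) =O[atTop] fun _ => (1 : ℝ) :=
    ((hvlim.const_mul 2).rexp.const_mul 4).isBigO_one ℝ
  have hforce : (fun r => 4 * exp (2 * v r) * (cosh (2 * u r) - 1)) =O[atTop]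
      fun r => exp (-5 * r) := by
    refine (hexp.mul (isBigO_sq_exp_neg_of_isBigO (by norm_num) hu
      cosh_sub_one_isBigO_sq)).congr_right fun r => ?_
    norm_num
  have hsmall : (fun r => exp (-5 * r)) =o[atTop] fun r => 4 / r * exp (-4 * r) := by
    refine ((isLittleO_exp_neg_mul_rpow_atTop one_pos (-1)).mul_isBigO
      (isBigO_refl (fun r => exp (-4 * r)) atTop)).const_mul_right' (c := 4) (by simp) |>.congr'
      (.of_forall fun r => ?_) ?_
    · simp only [← exp_add]
      ring_nf
    · refine .of_forall fun r => ?_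
      simp only [rpow_neg_one]
      ring
  refine hv.isBigO_exp_neg (D := 1) (by norm_num) hvlim zero_le_one ?_
  filter_upwards [(hforce.trans_isLittleO hsmall).bound one_pos, eventually_gt_atTop 0]
    with r hbound hr hlarge
  rw [one_mul] at hlarge
  rw [norm_eq_abs, norm_of_nonneg (by positivity), one_mul] at hbound
  have hsinh := sq_le_mul_sinh (2 * v r)
  have hg : |v r * (4 * exp (2 * v r) * (cosh (2 * u r) - 1))| ≤ 4 / r * v r ^ 2 := by
    rw [abs_mul, ← sq_abs (v r), sq, ← mul_assoc, mul_comm _ |v r|]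
    exact mul_le_mul_of_nonneg_left (hbound.trans (by gcongr)) (abs_nonneg _)
  linarith [neg_abs_le (v r * (4 * exp (2 * v r) * (cosh (2 * u r) - 1)))]

lemma exists_tendsto_of_laplacian_eq_sinh
    (hu : HasRadialLaplacian u u' fun r => 4 * exp (2 * v r) * sinh (2 * u r))
    (hlim : Tendsto u atTop (𝓝 0)) (hv : v =O[atTop] fun r => exp (-4 * r)) :
    ∃ A, Tendsto (fun r => √r * exp (2 * √2 * r) * u r) atTop (𝓝 A) ∧
      Tendsto (fun r => √r * exp (2 * √2 * r) * u' r) atTop (𝓝 (-(2 * √2) * A)) := by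
  have hκ : (2 * √2) ^ 2 = 8 := by rw [mul_pow, sq_sqrt zero_le_two]; norm_num
  have hv₂ := hv.const_mul_left 2
  have hcoef : ∀ᶠ r in atTop, (2 * √2) ^ 2 - 2 * √2 / r ≤ 8 * exp (2 * v r) := by
    have hsmall := hv₂.trans_isLittleO (isLittleO_exp_neg_mul_rpow_atTop four_pos (-1))
    filter_upwards [hsmall.bound (show 0 < √2 / 4 by positivity), eventually_gt_atTop 0]
      with r hbound hr
    rw [rpow_neg_one, norm_eq_abs, norm_of_nonneg (by positivity)] at hbound
    have hdiv : 2 * √2 / r = 8 * (√2 / 4 * r⁻¹) := by ring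
    rw [hκ, hdiv]
    linarith [add_one_le_exp (2 * v r), neg_abs_le (2 * v r)]
  have huO := isBigO_exp_neg_of_laplacian_eq_sinh hu (by positivity) hlim hcoef
  have hdecay := tendsto_exp_neg_mul_atTop (show 0 < 2 * √2 by positivity)
  refine hu.exists_tendsto_sqrt_mul_exp_mul (by positivity) huO ?_
  have hsqrt : 0 < √2 := by positivity
  have hprod : (fun r => (exp (2 * v r) - 1) * sinh (2 * u r)) =O[atTop]
      fun r => exp (-(4 + 2 * √2) * r) :=
    isBigO_exp_neg_mul_exp_neg le_rfl
      ((exp_sub_one_isBigO_id.comp_tendsto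
        (hv₂.trans_tendsto (tendsto_exp_neg_mul_atTop four_pos))).trans hv₂)
      ((sinh_isBigO_id.comp_tendsto ((huO.const_mul_left 2).trans_tendsto hdecay)).trans
        (huO.const_mul_left 2))
  have hcubic := isBigO_sq_exp_neg_of_isBigO (by positivity) huO sinh_sub_id_isBigO_sq
  refine (((isBigO_exp_mul_rpow (k := 2 * √2) (by linarith) _ hprod).add
    (isBigO_exp_mul_rpow (k := 2 * √2) (by linarith) _ hcubic)).const_mul_left 4).congr_left
      fun r => ?_
  rw [hκ]
  ring

lemma exists_tendsto_of_laplacian_eq_sinh_add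
    (hv : HasRadialLaplacian v v' fun r => 8 * sinh (2 * v r) +
      4 * exp (2 * v r) * (cosh (2 * u r) - 1))
    (hvO : v =O[atTop] fun r => exp (-4 * r)) (hu : u =O[atTop] fun r => exp (-(5 / 2) * r)) :
    ∃ B, Tendsto (fun r => √r * exp (4 * r) * v r) atTop (𝓝 B) ∧
      Tendsto (fun r => √r * exp (4 * r) * v' r) atTop (𝓝 (-4 * B)) := by
  refine hv.exists_tendsto_sqrt_mul_exp_mul four_pos hvO ?_
  have hvlim := hvO.trans_tendsto (tendsto_exp_neg_mul_atTop four_pos)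
  have hexp : (fun r => 4 * exp (2 * v r)) =O[atTop] fun _ => (1 : ℝ) :=
    ((hvlim.const_mul 2).rexp.const_mul 4).isBigO_one ℝ
  have hcubic := isBigO_sq_exp_neg_of_isBigO four_pos hvO sinh_sub_id_isBigO_sq
  have hcosh := isBigO_sq_exp_neg_of_isBigO (by norm_num) hu cosh_sub_one_isBigO_sq
  refine (((isBigO_exp_mul_rpow (k := 4) (by norm_num) _ hcubic).const_mul_left 8).add
    ((hexp.mul (isBigO_exp_mul_rpow (k := 4) (by norm_num) _ hcosh)).congr_right
      fun r => one_mul _)).congr_left fun r => ?_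
  ring

end SinhGordon

namespace IsSolution

variable {w₀ w₀' w₁ w₁' : ℝ → ℝ}

theorem exists_tendsto_atTop (H : IsSolution w₀ w₀' w₁ w₁') (h₀ : Tendsto w₀ atTop (𝓝 0))
    (h₁ : Tendsto w₁ atTop (𝓝 0)) :
    (∃ A, Tendsto (fun r => √r * exp (2 * √2 * r) * (w₀ r + w₁ r)) atTop (𝓝 A) ∧
      Tendsto (fun r => √r * exp (2 * √2 * r) * (w₀' r + w₁' r)) atTop (𝓝 (-(2 * √2) * A))) ∧
    ∃ B, Tendsto (fun r => √r * exp (4 * r) * (w₀ r - w₁ r)) atTop (𝓝 B) ∧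
      Tendsto (fun r => √r * exp (4 * r) * (w₀' r - w₁' r)) atTop (𝓝 (-4 * B)) := by
  have hulim : Tendsto (fun r => w₀ r + w₁ r) atTop (𝓝 0) := by simpa using h₀.add h₁
  have hvlim : Tendsto (fun r => w₀ r - w₁ r) atTop (𝓝 0) := by simpa using h₀.sub h₁
  have hcoef : ∀ᶠ r in atTop, (5 / 2) ^ 2 - 5 / 2 / r ≤ 8 * exp (2 * (w₀ r - w₁ r)) := by
    have hexp := (hvlim.const_mul 2).rexp.const_mul 8
    filter_upwards [hexp.eventually_const_lt (show (5 / 2 : ℝ) ^ 2 < _ by norm_num),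
      eventually_gt_atTop 0] with r h hr
    have : 0 < 5 / 2 / r := by positivity
    linarith
  have huO := isBigO_exp_neg_of_laplacian_eq_sinh H.laplacian_add (by norm_num) hulim hcoef
  have hvO := isBigO_exp_neg_of_laplacian_eq_sinh_add H.laplacian_sub hvlim huO
  exact ⟨exists_tendsto_of_laplacian_eq_sinh H.laplacian_add hulim hvO,
    exists_tendsto_of_laplacian_eq_sinh_add H.laplacian_sub hvO huO⟩

end IsSolution

/-! ### Transport along linear equations -/

section RadialRetraction

variable {E : Type*} [NormedAddCommGroup E] [NormedSpace ℝ E] {ρ : ℝ}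

/-- The radial retraction of a normed space onto its closed ball of radius `ρ`. It truncates a
linear vector field to a bounded one, to which the Picard–Lindelöf theorem applies on any
interval. -/
noncomputable def radialRetraction (ρ : ℝ) (x : E) : E := (ρ / max ρ ‖x‖) • x

lemma norm_radialRetraction (hρ : 0 < ρ) (x : E) :
    ‖radialRetraction ρ x‖ = ρ * ‖x‖ / max ρ ‖x‖ := by
  rw [radialRetraction, norm_smul, Real.norm_of_nonneg (by positivity), div_mul_eq_mul_div]

lemma norm_radialRetraction_le (hρ : 0 < ρ) (x : E) : ‖radialRetraction ρ x‖ ≤ ρ := by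
  rw [norm_radialRetraction hρ, div_le_iff₀ (by positivity)]
  gcongr
  exact le_max_right _ _

lemma norm_radialRetraction_le_norm (hρ : 0 < ρ) (x : E) : ‖radialRetraction ρ x‖ ≤ ‖x‖ := by
  rw [norm_radialRetraction hρ, div_le_iff₀ (by positivity), mul_comm]
  gcongr
  exact le_max_left _ _

lemma radialRetraction_of_norm_le (hρ : 0 < ρ) {x : E} (hx : ‖x‖ ≤ ρ) :
    radialRetraction ρ x = x := by
  rw [radialRetraction, max_eq_left hx, div_self hρ.ne', one_smul]

lemma norm_radialRetraction_sub_le (hρ : 0 < ρ) (x y : E) :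
    ‖radialRetraction ρ x - radialRetraction ρ y‖ ≤ 2 * ‖x - y‖ := by
  have hx : 0 < max ρ ‖x‖ := lt_max_of_lt_left hρ
  have hy : 0 < max ρ ‖y‖ := lt_max_of_lt_left hρ
  set α := ρ / max ρ ‖x‖
  set β := ρ / max ρ ‖y‖
  have hα₀ : 0 ≤ α := by positivity
  have hα₁ : α ≤ 1 := (div_le_one hx).2 (le_max_left _ _)
  have hαβ : α - β = α * ((max ρ ‖y‖ - max ρ ‖x‖) / max ρ ‖y‖) := by
    simp only [α, β]; field_simp
  have hmax : |max ρ ‖y‖ - max ρ ‖x‖| ≤ ‖x - y‖ := by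
    rw [abs_sub_comm]
    exact (abs_max_sub_max_le_max _ _ _ _).trans (by simp [abs_norm_sub_norm_le])
  have hsecond : |α - β| * ‖y‖ ≤ ‖x - y‖ :=
    calc |α - β| * ‖y‖ = α * (|max ρ ‖y‖ - max ρ ‖x‖| / max ρ ‖y‖) * ‖y‖ := by
          rw [hαβ, abs_mul, abs_div _ (max ρ ‖y‖), abs_of_pos hy, abs_of_nonneg hα₀]
      _ ≤ 1 * (|max ρ ‖y‖ - max ρ ‖x‖| / max ρ ‖y‖) * max ρ ‖y‖ := by
          gcongr; exact le_max_right _ _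
      _ = |max ρ ‖y‖ - max ρ ‖x‖| := by field_simp
      _ ≤ ‖x - y‖ := hmax
  calc ‖radialRetraction ρ x - radialRetraction ρ y‖ = ‖α • (x - y) + (α - β) • y‖ := by
        simp only [radialRetraction, α, β, smul_sub, sub_smul]; congr 1; abel
    _ ≤ |α| * ‖x - y‖ + |α - β| * ‖y‖ := by
        simpa only [norm_smul, Real.norm_eq_abs] using norm_add_le (α • (x - y)) ((α - β) • y)
    _ ≤ 1 * ‖x - y‖ + ‖x - y‖ := by rw [abs_of_nonneg hα₀]; gcongr
    _ = 2 * ‖x - y‖ := by ring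

end RadialRetraction

lemma gronwallBound_zero_le {K ε x : ℝ} (hK : 0 ≤ K) (hε : 0 ≤ ε) :
    gronwallBound 0 K ε x ≤ ε * x * exp (K * x) := by
  rcases hK.eq_or_lt with rfl | hK
  · simp [gronwallBound_K0]
  · have hexp : exp (K * x) - 1 ≤ K * x * exp (K * x) := by
      have hinv : exp (-(K * x)) * exp (K * x) = 1 := by rw [← exp_add]; simp
      nlinarith [exp_pos (K * x), Real.add_one_le_exp (-(K * x))]
    calc gronwallBound 0 K ε x = ε / K * (exp (K * x) - 1) := by
          rw [gronwallBound_of_K_ne_0 hK.ne']; simp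
      _ ≤ ε / K * (K * x * exp (K * x)) := by gcongr
      _ = ε * x * exp (K * x) := by field_simp

section Transport

variable {R : Type*} [NormedRing R] [NormedAlgebra ℝ R] {A : ℝ → R} {a b : ℝ}

/-- `Φ` solves the linear differential equation `Φ' = A Φ` on `[a, b]`. Only right derivatives are
required, as in Grönwall's inequality. -/
structure IsLinearSolutionOn (A : ℝ → R) (a b : ℝ) (Φ : ℝ → R) : Prop where
  continuousOn : ContinuousOn Φ (Icc a b)
  hasDerivWithinAt : ∀ t ∈ Ico a b, HasDerivWithinAt Φ (A t * Φ t) (Ici t) t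

lemma exists_hasDerivWithinAt_mul_radialRetraction [CompleteSpace R] {M ρ : ℝ}
    (hA : ContinuousOn A (Icc a b)) (hM : ∀ t ∈ Icc a b, ‖A t‖ ≤ M) (hρ : 0 < ρ) (hab : a ≤ b) :
    ∃ Φ : ℝ → R, Φ a = 1 ∧ ∀ t ∈ Icc a b,
      HasDerivWithinAt Φ (A t * radialRetraction ρ (Φ t)) (Icc a b) t := by
  have hM₀ : 0 ≤ M := (norm_nonneg _).trans (hM a ⟨le_rfl, hab⟩)
  have hab' : 0 ≤ b - a := sub_nonneg.2 hab
  have hPL : IsPicardLindelof (fun t X => A t * radialRetraction ρ X) (tmin := a) (tmax := b)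
      ⟨a, le_rfl, hab⟩ (1 : R) ⟨M * ρ * (b - a), by positivity⟩ 0 ⟨M * ρ, by positivity⟩
      ⟨M * 2, by positivity⟩ := by
    refine ⟨fun t ht => (LipschitzWith.of_dist_le_mul fun X Y => ?_).lipschitzOnWith,
      fun X _ => hA.mul continuousOn_const, fun t ht X _ => ?_, ?_⟩
    · change _ ≤ M * 2 * _
      simp only [dist_eq_norm, ← mul_sub, mul_assoc]
      refine (norm_mul_le _ _).trans ?_
      exact mul_le_mul (hM t ht) (norm_radialRetraction_sub_le hρ X Y) (norm_nonneg _) hM₀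
    · refine (norm_mul_le _ _).trans ?_
      exact mul_le_mul (hM t ht) (norm_radialRetraction_le hρ X) (norm_nonneg _) hM₀
    · change M * ρ * max (b - a) (a - a) ≤ M * ρ * (b - a) - 0
      simp [hab']
  exact hPL.exists_eq_forall_mem_Icc_hasDerivWithinAt₀

lemma exists_isLinearSolutionOn [CompleteSpace R] (hA : ContinuousOn A (Icc a b)) (hab : a ≤ b) :
    ∃ Φ : ℝ → R, Φ a = 1 ∧ IsLinearSolutionOn A a b Φ := by
  obtain ⟨M, hM⟩ := isCompact_Icc.exists_bound_of_continuousOn hA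
  have hM₀ : 0 ≤ M := (norm_nonneg _).trans (hM a ⟨le_rfl, hab⟩)
  -- Grönwall's inequality keeps the truncated solution inside the ball of this radius.
  set ρ : ℝ := (‖(1 : R)‖ + 1) * exp (M * (b - a)) with hρ
  have hρ₀ : 0 < ρ := by positivity
  obtain ⟨Φ, h₁, hΦ⟩ := exists_hasDerivWithinAt_mul_radialRetraction hA hM hρ₀ hab
  have hcont : ContinuousOn Φ (Icc a b) := fun t ht => (hΦ t ht).continuousWithinAt
  have hright : ∀ t ∈ Ico a b,
      HasDerivWithinAt Φ (A t * radialRetraction ρ (Φ t)) (Ici t) t := fun t ht =>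
    (hΦ t ⟨ht.1, ht.2.le⟩).mono_of_mem_nhdsWithin
      (mem_of_superset (Icc_mem_nhdsGE ht.2) (Icc_subset_Icc ht.1 le_rfl))
  have hbound : ∀ t ∈ Icc a b, ‖Φ t‖ ≤ ρ := fun t ht =>
    calc ‖Φ t‖ ≤ gronwallBound ‖(1 : R)‖ M 0 (t - a) := by
          refine norm_le_gronwallBound_of_norm_deriv_right_le hcont hright (by rw [h₁])
            (fun s hs => ?_) t ht
          rw [add_zero]
          exact (norm_mul_le _ _).trans (mul_le_mul (hM s ⟨hs.1, hs.2.le⟩)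
            (norm_radialRetraction_le_norm hρ₀ _) (norm_nonneg _) hM₀)
      _ = ‖(1 : R)‖ * exp (M * (t - a)) := gronwallBound_ε0 _ _ _
      _ ≤ ρ := by
          rw [hρ]
          gcongr
          exacts [le_add_of_nonneg_right zero_le_one, ht.2]
  refine ⟨Φ, h₁, hcont, fun t ht => ?_⟩
  simpa only [radialRetraction_of_norm_le hρ₀ (hbound t ⟨ht.1, ht.2.le⟩)] using hright t ht

open Classical in
/-- The solution of `Φ' = A Φ` on `[a, b]` with `Φ a = 1`; the junk value `0` is taken when there is
none. -/
noncomputable def fundamentalSolution (A : ℝ → R) (a b : ℝ) : ℝ → R :=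
  if h : ∃ Φ : ℝ → R, Φ a = 1 ∧ IsLinearSolutionOn A a b Φ then h.choose else 0

/-- Parallel transport from `a` to `b` along the linear differential equation `Φ' = A Φ`. -/
noncomputable def transport (A : ℝ → R) (a b : ℝ) : R := fundamentalSolution A a b b

variable [CompleteSpace R]

lemma fundamentalSolution_spec (hA : ContinuousOn A (Icc a b)) (hab : a ≤ b) :
    fundamentalSolution A a b a = 1 ∧
      IsLinearSolutionOn A a b (fundamentalSolution A a b) := by
  have h := exists_isLinearSolutionOn hA hab
  rw [fundamentalSolution, dif_pos h]
  exact h.choose_spec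

lemma norm_sub_transport_mul_le (hA : ContinuousOn A (Icc a b)) (hab : a ≤ b) {Ψ Ψ' : ℝ → R}
    (hΨ : ContinuousOn Ψ (Icc a b)) (hΨ' : ∀ t ∈ Ico a b, HasDerivWithinAt Ψ (Ψ' t) (Ici t) t)
    {K ε : ℝ} (hK : ∀ t ∈ Icc a b, ‖A t‖ ≤ K) (hε₀ : 0 ≤ ε)
    (hε : ∀ t ∈ Ico a b, ‖Ψ' t - A t * Ψ t‖ ≤ ε) :
    ‖Ψ b - transport A a b * Ψ a‖ ≤ ε * (b - a) * exp (K * (b - a)) := by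
  obtain ⟨hΦ₁, hΦ⟩ := fundamentalSolution_spec hA hab
  have hK₀ : 0 ≤ K := (norm_nonneg _).trans (hK a ⟨le_rfl, hab⟩)
  refine le_trans ?_ (gronwallBound_zero_le hK₀ hε₀)
  refine norm_le_gronwallBound_of_norm_deriv_right_le
    (f := fun t => Ψ t - fundamentalSolution A a b t * Ψ a)
    (hΨ.sub (hΦ.continuousOn.mul continuousOn_const))
    (fun t ht => (hΨ' t ht).sub ((hΦ.hasDerivWithinAt t ht).mul_const _)) (by simp [hΦ₁])
    (fun t ht => ?_) b ⟨hab, le_rfl⟩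
  set Φ := fundamentalSolution A a b
  calc ‖Ψ' t - A t * Φ t * Ψ a‖
      = ‖A t * (Ψ t - Φ t * Ψ a) + (Ψ' t - A t * Ψ t)‖ := by congr 1; noncomm_ring
    _ ≤ K * ‖Ψ t - Φ t * Ψ a‖ + ε := by
        refine (norm_add_le _ _).trans (add_le_add ((norm_mul_le _ _).trans ?_) (hε t ht))
        gcongr
        exact hK t ⟨ht.1, ht.2.le⟩

lemma transport_eq {Ψ : ℝ → R} (hA : ContinuousOn A (Icc a b)) (hab : a ≤ b)
    (hΨ : ∀ t, HasDerivAt Ψ (A t * Ψ t) t) (hΨa : Ψ a = 1) : transport A a b = Ψ b := by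
  obtain ⟨K, hK⟩ := isCompact_Icc.exists_bound_of_continuousOn hA
  have h := norm_sub_transport_mul_le hA hab (Ψ' := fun t => A t * Ψ t) (K := K) (ε := 0)
    (HasDerivAt.continuousOn fun t _ => hΨ t) (fun t _ => (hΨ t).hasDerivWithinAt) hK le_rfl
    fun t _ => by rw [sub_self, norm_zero]
  rw [zero_mul, zero_mul, norm_le_zero_iff, sub_eq_zero, hΨa, mul_one] at h
  exact h.symm

lemma exists_norm_gauge_mul_transport_sub_le (hA : ContinuousOn A (Icc a b)) (hab : a ≤ b) (K : ℝ) :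
    ∃ C, ∀ {A₂ G G' : ℝ → R} {ε : ℝ}, ContinuousOn A₂ (Icc a b) → (∀ t ∈ Icc a b, ‖A₂ t‖ ≤ K) →
      (∀ t, HasDerivAt G (G' t) t) → 0 ≤ ε →
      (∀ t ∈ Icc a b, ‖G' t + G t * A t - A₂ t * G t‖ ≤ ε) →
      ‖G b * transport A a b - transport A₂ a b * G a‖ ≤ C * ε := by
  obtain ⟨hΦ₁, hΦ⟩ := fundamentalSolution_spec hA hab
  obtain ⟨M, hM⟩ := isCompact_Icc.exists_bound_of_continuousOn hΦ.continuousOn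
  have hM₀ : 0 ≤ M := (norm_nonneg _).trans (hM a ⟨le_rfl, hab⟩)
  refine ⟨M * (b - a) * exp (K * (b - a)), fun {A₂ G G' ε} hA₂ hK hG hε₀ hε => ?_⟩
  have hGΦ := norm_sub_transport_mul_le hA₂ hab (Ψ := fun t => G t * fundamentalSolution A a b t)
    (ContinuousOn.mul (fun t _ => (hG t).continuousAt.continuousWithinAt) hΦ.continuousOn)
    (fun t ht => (hG t).hasDerivWithinAt.mul (hΦ.hasDerivWithinAt t ht)) hK
    (mul_nonneg hε₀ hM₀) (fun t ht => ?_)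
  · rw [hΦ₁, mul_one] at hGΦ
    exact hGΦ.trans_eq (by ring)
  · have ht' : t ∈ Icc a b := ⟨ht.1, ht.2.le⟩
    set Φ := fundamentalSolution A a b
    calc ‖G' t * Φ t + G t * (A t * Φ t) - A₂ t * (G t * Φ t)‖
        = ‖(G' t + G t * A t - A₂ t * G t) * Φ t‖ := by congr 1; noncomm_ring
      _ ≤ ε * M := norm_mul_le_of_le (hε t ht') (hM t ht')

lemma mul_transport_eq_transport_mul {A₂ G G' : ℝ → R} (hA : ContinuousOn A (Icc a b))
    (hA₂ : ContinuousOn A₂ (Icc a b)) (hab : a ≤ b) (hG : ∀ t, HasDerivAt G (G' t) t)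
    (hgauge : ∀ t, G' t + G t * A t = A₂ t * G t) :
    G b * transport A a b = transport A₂ a b * G a := by
  obtain ⟨K, hK⟩ := isCompact_Icc.exists_bound_of_continuousOn hA₂
  obtain ⟨C, hC⟩ := exists_norm_gauge_mul_transport_sub_le hA hab K
  simpa [sub_eq_zero] using hC hA₂ hK hG le_rfl (fun t _ => by simp [hgauge t])

lemma hasDerivAt_commutator_of_isLittleO {T : ℝ → R} {β : R} {x : ℝ}
    (h : (fun h : ℝ => (1 + h • β) * T x - T (x + h) * (1 + h • β)) =o[𝓝 0] fun h => h) :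
    HasDerivAt T (β * T x - T x * β) x := by
  have hinv : HasDerivAt (fun h : ℝ => Ring.inverse (1 + h • β)) (-β) 0 := by
    have hone : HasDerivAt (fun h : ℝ => 1 + h • β) β 0 := by
      simpa using ((hasDerivAt_id (0 : ℝ)).smul_const β).const_add (1 : R)
    have hring := hasFDerivAt_ringInverse (𝕜 := ℝ) (1 : Rˣ)
    exact (HasFDerivAt.comp_hasDerivAt_of_eq (0 : ℝ) hring hone (by simp)).congr_deriv (by simp)
  have hmul : HasDerivAt (fun h : ℝ => T (x + h) * (1 + h • β)) (β * T x) 0 := by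
    rw [hasDerivAt_iff_isLittleO_nhds_zero]
    refine h.neg_left.congr_left fun h => ?_
    simp only [zero_add, add_zero, zero_smul, mul_one, add_mul, one_mul, smul_mul_assoc]
    abel
  have hT : HasDerivAt (fun h => T (x + h)) (β * T x - T x * β) 0 := by
    refine (hmul.mul hinv |>.congr_deriv ?_).congr_of_eventuallyEq ?_
    · simp [sub_eq_add_neg]
    · have hunit : ∀ᶠ h : ℝ in 𝓝 0, IsUnit (1 + h • β) := by
        have hcont : Continuous fun h : ℝ => 1 + h • β := by fun_prop
        exact hcont.continuousAt.eventually
          (Units.isOpen.mem_nhds (show IsUnit (1 + (0 : ℝ) • β) by simp))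
      filter_upwards [hunit] with h hh
      simp [mul_assoc, Ring.mul_inverse_cancel _ hh]
  rw [← sub_self x] at hT
  have hcomp := hT.comp_sub_const x x
  simpa only [add_sub_cancel] using hcomp

end Transport

section Lax

variable {R : Type*} [NormedRing R] [NormedAlgebra ℝ R] {a b x : ℝ}
  {𝒜 : ℝ → ℝ → R} {𝒜' B B' : ℝ → R}

lemma norm_one_add_smul_gauge_defect_le (t : ℝ) {h η M : ℝ}
    (hzero : 𝒜' t = B' t + B t * 𝒜 x t - 𝒜 x t * B t)
    (hderiv : ‖𝒜 (x + h) t - 𝒜 x t - h • 𝒜' t‖ ≤ η * |h|)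
    (hcont : ‖𝒜 (x + h) t - 𝒜 x t‖ ≤ η) (hM : ‖B t‖ ≤ M) :
    ‖h • B' t + (1 + h • B t) * 𝒜 x t - 𝒜 (x + h) t * (1 + h • B t)‖ ≤ η * |h| * (1 + M) := by
  calc _ = ‖-((𝒜 (x + h) t - 𝒜 x t - h • 𝒜' t) + (𝒜 (x + h) t - 𝒜 x t) * (h • B t))‖ := by
        rw [hzero]
        congr 1
        simp only [smul_add, smul_sub, smul_mul_assoc, mul_smul_comm, add_mul, sub_mul, mul_add,
          one_mul, mul_one]
        abel
    _ ≤ η * |h| + η * (|h| * M) := by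
        rw [norm_neg]
        refine (norm_add_le _ _).trans (add_le_add hderiv (norm_mul_le_of_le hcont ?_))
        rw [norm_smul, Real.norm_eq_abs]
        gcongr
    _ = η * |h| * (1 + M) := by ring

variable [CompleteSpace R]

-- By zero curvature, `1 + h B` is a gauge transformation from `𝒜 x` to `𝒜 (x + h)` up to `o(h)`.
lemma one_add_smul_mul_transport_sub_isLittleO (hab : a ≤ b)
    (h𝒜 : ∀ y, ContinuousOn (𝒜 y) (Icc a b)) (hB : ∀ t, HasDerivAt B (B' t) t)
    (h𝒜' : ContinuousOn 𝒜' (Icc a b))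
    (hderiv : ∀ ε > 0, ∀ᶠ h in 𝓝 (0 : ℝ), ∀ t ∈ Icc a b,
      ‖𝒜 (x + h) t - 𝒜 x t - h • 𝒜' t‖ ≤ ε * |h|)
    (hzero : ∀ t, 𝒜' t = B' t + B t * 𝒜 x t - 𝒜 x t * B t) :
    (fun h : ℝ => (1 + h • B b) * transport (𝒜 x) a b - transport (𝒜 (x + h)) a b * (1 + h • B a))
      =o[𝓝 0] fun h => h := by
  obtain ⟨MA, hMA⟩ := isCompact_Icc.exists_bound_of_continuousOn (h𝒜 x)
  obtain ⟨MA', hMA'⟩ := isCompact_Icc.exists_bound_of_continuousOn h𝒜'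
  obtain ⟨MB, hMB⟩ := isCompact_Icc.exists_bound_of_continuousOn (s := Icc a b)
    fun t _ => (hB t).continuousAt.continuousWithinAt
  have hMB₀ : 0 ≤ MB := (norm_nonneg _).trans (hMB a ⟨le_rfl, hab⟩)
  have : 0 ≤ MA' := (norm_nonneg _).trans (hMA' a ⟨le_rfl, hab⟩)
  obtain ⟨C, hC⟩ := exists_norm_gauge_mul_transport_sub_le (h𝒜 x) hab (MA + 1)
  rw [isLittleO_iff]
  intro ε hε
  obtain ⟨η, hη₀, hη₁, hηε⟩ : ∃ η > 0, η ≤ 1 ∧ η * (1 + MB) * |C| ≤ ε := by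
    refine ⟨min 1 (ε / ((1 + MB) * (|C| + 1))), by positivity, min_le_left _ _, ?_⟩
    calc _ ≤ ε / ((1 + MB) * (|C| + 1)) * (1 + MB) * (|C| + 1) := by
          gcongr
          exacts [min_le_right _ _, le_add_of_nonneg_right zero_le_one]
      _ = ε := by field_simp
  have hsmall : ∀ᶠ h in 𝓝 (0 : ℝ), |h| * (1 + MA') < η := by
    have hlim : Tendsto (fun h : ℝ => |h| * (1 + MA')) (𝓝 0) (𝓝 (|0| * (1 + MA'))) :=
      (continuous_abs.mul continuous_const).tendsto 0
    exact hlim.eventually_lt_const (by simpa using hη₀)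
  filter_upwards [hderiv η hη₀, hsmall] with h hh hsmall
  have hdiff : ∀ t ∈ Icc a b, ‖𝒜 (x + h) t - 𝒜 x t‖ ≤ η := fun t ht =>
    calc ‖𝒜 (x + h) t - 𝒜 x t‖ = ‖(𝒜 (x + h) t - 𝒜 x t - h • 𝒜' t) + h • 𝒜' t‖ := by
          rw [sub_add_cancel]
      _ ≤ 1 * |h| + |h| * MA' := by
          refine (norm_add_le _ _).trans (add_le_add ((hh t ht).trans (by gcongr)) ?_)
          rw [norm_smul, Real.norm_eq_abs]
          gcongr
          exact hMA' t ht
      _ ≤ η := by linarith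
  refine (hC (h𝒜 (x + h)) (fun t ht => ?_) (fun t => ((hB t).const_smul h).const_add 1)
    (by positivity) fun t ht => norm_one_add_smul_gauge_defect_le t (hzero t) (hh t ht)
      (hdiff t ht) (hMB t ht)).trans ?_
  · calc ‖𝒜 (x + h) t‖ = ‖𝒜 x t + (𝒜 (x + h) t - 𝒜 x t)‖ := by rw [add_sub_cancel]
      _ ≤ MA + 1 := (norm_add_le _ _).trans (add_le_add (hMA t ht) ((hdiff t ht).trans hη₁))
  · calc C * (η * |h| * (1 + MB)) ≤ |C| * (η * |h| * (1 + MB)) := by gcongr; exact le_abs_self C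
      _ = η * (1 + MB) * |C| * |h| := by ring
      _ ≤ ε * ‖h‖ := by rw [Real.norm_eq_abs]; gcongr

lemma hasDerivAt_mul_transport (hab : a ≤ b) (h𝒜 : ∀ y, ContinuousOn (𝒜 y) (Icc a b))
    (hB : ∀ t, HasDerivAt B (B' t) t) (h𝒜' : ContinuousOn 𝒜' (Icc a b))
    (hderiv : ∀ ε > 0, ∀ᶠ h in 𝓝 (0 : ℝ), ∀ t ∈ Icc a b,
      ‖𝒜 (x + h) t - 𝒜 x t - h • 𝒜' t‖ ≤ ε * |h|)
    (hzero : ∀ t, 𝒜' t = B' t + B t * 𝒜 x t - 𝒜 x t * B t) {D : R} (hD : D * B b = B a * D) :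
    HasDerivAt (fun y => D * transport (𝒜 y) a b)
      (B a * (D * transport (𝒜 x) a b) - D * transport (𝒜 x) a b * B a) x := by
  refine hasDerivAt_commutator_of_isLittleO ?_
  refine ((ContinuousLinearMap.mul ℝ R D).isBigO_comp _ _).trans_isLittleO
    (one_add_smul_mul_transport_sub_isLittleO hab h𝒜 hB h𝒜' hderiv hzero) |>.congr_left fun h => ?_
  simp only [ContinuousLinearMap.mul_apply', mul_sub, add_mul, mul_add, one_mul, mul_one,
    smul_mul_assoc, mul_smul_comm, ← mul_assoc, hD]

end Lax

/-! ### Behaviour at the origin -/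

lemma tendsto_div_id_of_hasDerivAt {f f' : ℝ → ℝ} {L : ℝ} (hf : ∀ x, HasDerivAt f (f' x) x)
    (hf' : Tendsto f' atTop (𝓝 L)) : Tendsto (fun x => f x / x) atTop (𝓝 L) := by
  have hlittle : (fun x => f x - L * x) =o[atTop] fun x => x := by
    rw [isLittleO_iff]
    intro ε hε
    have hslope : ∀ᶠ x in atTop, ‖f' x - L‖ ≤ ε / 2 :=
      (tendsto_iff_norm_sub_tendsto_zero.1 hf').eventually_le_const (half_pos hε)
    obtain ⟨a, ha⟩ := eventually_atTop.1 hslope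
    have hderiv : ∀ x ∈ Ici a, HasDerivWithinAt (fun x => f x - L * x) (f' x - L) (Ici a) x :=
      fun x _ => (((hf x).sub ((hasDerivAt_id x).const_mul L)).congr_deriv
        (by rw [mul_one])).hasDerivWithinAt
    filter_upwards [eventually_ge_atTop (max a 0),
      eventually_ge_atTop ((2 * ‖f a - L * a‖ + ε * |a|) / ε)] with x hx hx'
    obtain ⟨hax, hx₀⟩ := max_le_iff.1 hx
    have hinc := (convex_Ici a).norm_image_sub_le_of_norm_hasDerivWithin_le hderiv ha
      self_mem_Ici hax
    rw [Real.norm_of_nonneg (sub_nonneg.2 hax)] at hinc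
    rw [div_le_iff₀ hε] at hx'
    rw [Real.norm_of_nonneg hx₀]
    have htri := norm_le_norm_add_norm_sub' (f x - L * x) (f a - L * a)
    nlinarith [neg_abs_le a]
  have hlim := hlittle.tendsto_div_nhds_zero.add_const L
  rw [zero_add] at hlim
  refine hlim.congr' ?_
  filter_upwards [eventually_ne_atTop 0] with x hx
  field_simp
  ring

lemma tendsto_exp_neg_atTop_nhdsGT_zero : Tendsto (fun s : ℝ => exp (-s)) atTop (𝓝[>] 0) :=
  tendsto_nhdsWithin_iff.2
    ⟨tendsto_exp_neg_atTop_nhds_zero, Eventually.of_forall fun _ => exp_pos _⟩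

lemma mul_exp_isBigO_rpow {f : ℝ → ℝ} {c δ : ℝ}
    (h : Tendsto (fun r => f r / log r) (𝓝[>] 0) (𝓝 c)) (hδ : δ < c + 1) :
    (fun r => r * exp (f r)) =O[𝓝[>] 0] fun r => r ^ δ := by
  refine IsBigO.of_bound 1 ?_
  filter_upwards [h.eventually_const_lt (show δ - 1 < c by linarith),
    Ioo_mem_nhdsGT one_pos] with r hr ⟨hr₀, hr₁⟩
  rw [lt_div_iff_of_neg (log_neg hr₀ hr₁)] at hr
  have hpos : 0 < r * exp (f r) := by positivity
  rw [one_mul, Real.norm_of_nonneg hpos.le, Real.norm_of_nonneg (rpow_nonneg hr₀.le _),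
    rpow_def_of_pos hr₀, ← exp_log hpos, exp_le_exp, log_mul hr₀.ne' (exp_ne_zero _), log_exp]
  linarith

lemma tendsto_mul_exp_nhdsGT_zero {f : ℝ → ℝ} {c : ℝ}
    (h : Tendsto (fun r => f r / log r) (𝓝[>] 0) (𝓝 c)) (hc : -1 < c) :
    Tendsto (fun r => r * exp (f r)) (𝓝[>] 0) (𝓝 0) := by
  have hδ : 0 < (c + 1) / 2 := by linarith
  refine (mul_exp_isBigO_rpow h (show (c + 1) / 2 < c + 1 by linarith)).trans_tendsto ?_
  have hcont := (continuousAt_rpow_const 0 ((c + 1) / 2) (Or.inr hδ.le)).tendsto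
  rw [zero_rpow hδ.ne'] at hcont
  exact hcont.mono_left nhdsWithin_le_nhds

-- In the variable `s = -log r` one has `r z' = -dz/ds`, and its derivative decays exponentially.
lemma HasRadialLaplacian.tendsto_id_mul_deriv_nhdsGT_zero {z z' f : ℝ → ℝ} {c δ : ℝ}
    (hz : HasRadialLaplacian z z' f) (hδ : 0 < δ)
    (hf : (fun r => r ^ 2 * f r) =O[𝓝[>] 0] fun r => r ^ δ)
    (hc : Tendsto (fun r => z r / log r) (𝓝[>] 0) (𝓝 c)) :
    Tendsto (fun r => r * z' r) (𝓝[>] 0) (𝓝 c) := by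
  have hexp (s : ℝ) : HasDerivAt (fun s : ℝ => exp (-s)) (-exp (-s)) s := by
    simpa using (hasDerivAt_neg s).exp
  have hrz' (s : ℝ) : HasDerivAt (fun s => exp (-s) * z' (exp (-s)))
      (exp (-s) * f (exp (-s)) * -exp (-s)) s :=
    HasDerivAt.comp (h₂ := fun r => r * z' r) s (hz.hasDerivAt_id_mul_deriv (exp_pos _)) (hexp s)
  have hdecay : (fun s => exp (-s) * f (exp (-s)) * -exp (-s)) =O[atTop]
      fun s : ℝ => s ^ (-2 : ℝ) := by
    refine ((hf.comp_tendsto tendsto_exp_neg_atTop_nhdsGT_zero).neg_left.trans ?_).congr_left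
      fun s => ?_
    · refine (isLittleO_exp_neg_mul_rpow_atTop hδ (-2)).isBigO.congr_left fun s => ?_
      simp only [Function.comp, ← exp_mul]
      ring_nf
    · simp only [Function.comp]
      ring
  obtain ⟨L, hL⟩ := exists_tendsto_of_hasDerivAt_isBigO_rpow (by norm_num)
    (Eventually.of_forall hrz') hdecay
  have hslope : Tendsto (fun s => z (exp (-s)) / s) atTop (𝓝 (-L)) :=
    tendsto_div_id_of_hasDerivAt (fun s => (hz.hasDerivAt _ (exp_pos (-s))).comp s (hexp s))
      (hL.neg.congr fun s => by ring)
  have hc' : Tendsto (fun s => z (exp (-s)) / s) atTop (𝓝 (-c)) :=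
    (hc.comp tendsto_exp_neg_atTop_nhdsGT_zero).neg.congr fun s => by
      simp [Function.comp, log_exp, div_neg]
  obtain rfl : L = c := neg_inj.1 (tendsto_nhds_unique hslope hc')
  refine (hL.comp (tendsto_neg_atBot_atTop.comp tendsto_log_nhdsGT_zero)).congr' ?_
  filter_upwards [self_mem_nhdsWithin] with r hr
  simp only [Function.comp, neg_neg, exp_log (show 0 < r from hr)]

lemma sq_mul_exp_sub_exp_isBigO_rpow {f g : ℝ → ℝ} {a b δ : ℝ}
    (hf : Tendsto (fun r => f r / log r) (𝓝[>] 0) (𝓝 a))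
    (hg : Tendsto (fun r => g r / log r) (𝓝[>] 0) (𝓝 b)) (ha : δ < a + 1) (hb : δ < b + 1) :
    (fun r => r ^ 2 * (2 * (exp (2 * f r) - exp (2 * g r)))) =O[𝓝[>] 0]
      fun r => r ^ (2 * δ) := by
  have hsq {h : ℝ → ℝ} {c : ℝ} (hh : Tendsto (fun r => h r / log r) (𝓝[>] 0) (𝓝 c))
      (hc : δ < c + 1) : (fun r => (r * exp (h r)) ^ 2) =O[𝓝[>] 0] fun r => r ^ (2 * δ) := by
    refine ((mul_exp_isBigO_rpow hh hc).pow 2).congr' EventuallyEq.rfl ?_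
    filter_upwards [self_mem_nhdsWithin] with r (hr : 0 < r)
    rw [← rpow_mul_natCast hr.le]
    congr 1
    push_cast
    ring
  refine (((hsq hf ha).sub (hsq hg hb)).const_mul_left 2).congr_left fun r => ?_
  rw [two_mul (f r), two_mul (g r), exp_add, exp_add]
  ring

namespace IsSolution

variable {w₀ w₀' w₁ w₁' : ℝ → ℝ} {γ₀ γ₁ : ℝ}

lemma tendsto_id_mul_deriv_nhdsGT_zero (H : IsSolution w₀ w₀' w₁ w₁')
    (hγ₀ : -1 < γ₀) (hγ₁ : γ₁ < 1) (hγ : γ₀ - 2 < γ₁)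
    (h₀ : Tendsto (fun r => 2 * w₀ r / log r) (𝓝[>] 0) (𝓝 γ₀))
    (h₁ : Tendsto (fun r => 2 * w₁ r / log r) (𝓝[>] 0) (𝓝 γ₁)) :
    Tendsto (fun r => r * w₀' r) (𝓝[>] 0) (𝓝 (γ₀ / 2)) ∧
      Tendsto (fun r => r * w₁' r) (𝓝[>] 0) (𝓝 (γ₁ / 2)) := by
  obtain ⟨δ, hδ, hδ₁, hδ₂, hδ₃⟩ : ∃ δ > 0, δ < γ₀ + 1 ∧ δ < (γ₁ - γ₀) / 2 + 1 ∧ δ < -γ₁ + 1 := by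
    have hmin : 0 < min (γ₀ + 1) (min ((γ₁ - γ₀) / 2 + 1) (-γ₁ + 1)) := by
      refine lt_min ?_ (lt_min ?_ ?_) <;> linarith
    obtain ⟨δ, hδ, hδ'⟩ := exists_between hmin
    exact ⟨δ, hδ, by simpa using hδ'⟩
  have h₁₀ : Tendsto (fun r => (w₁ r - w₀ r) / log r) (𝓝[>] 0) (𝓝 ((γ₁ - γ₀) / 2)) :=
    ((h₁.sub h₀).div_const 2).congr fun r => by ring
  have hneg : Tendsto (fun r => -(2 * w₁ r) / log r) (𝓝[>] 0) (𝓝 (-γ₁)) :=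
    h₁.neg.congr fun r => by ring
  constructor
  · refine H.laplacian₀.tendsto_id_mul_deriv_nhdsGT_zero (mul_pos two_pos hδ) ?_
      ((h₀.div_const 2).congr fun r => by ring)
    exact (sq_mul_exp_sub_exp_isBigO_rpow h₀ h₁₀ hδ₁ hδ₂).congr_left fun r => by ring_nf
  · refine H.laplacian₁.tendsto_id_mul_deriv_nhdsGT_zero (mul_pos two_pos hδ) ?_
      ((h₁.div_const 2).congr fun r => by ring)
    exact (sq_mul_exp_sub_exp_isBigO_rpow h₁₀ hneg hδ₂ hδ₃).congr_left fun r => by ring_nf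

end IsSolution

/-! ### The tt* connection and its holonomy -/

section LinearFamily

variable {R V : Type*} [NormedRing R] [NormedAlgebra ℝ R] [CompleteSpace R]
  [NormedAddCommGroup V] [NormedSpace ℝ V] {L : ℝ → V →L[ℝ] R} {a b x : ℝ}

lemma continuous_transport_clm (hL : Continuous L) (hab : a ≤ b) :
    Continuous fun q => transport (fun t => L t q) a b := by
  obtain ⟨M, hM⟩ := isCompact_Icc.exists_bound_of_continuousOn (hL.continuousOn (s := Icc a b))
  have hM₀ : 0 ≤ M := (norm_nonneg _).trans (hM a ⟨le_rfl, hab⟩)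
  have hcont : ∀ q, ContinuousOn (fun t => L t q) (Icc a b) := fun q =>
    (hL.clm_apply continuous_const).continuousOn
  refine continuous_iff_continuousAt.2 fun q₀ => ?_
  obtain ⟨C, hC⟩ := exists_norm_gauge_mul_transport_sub_le (hcont q₀) hab (M * (‖q₀‖ + 1))
  refine tendsto_iff_norm_sub_tendsto_zero.2 (squeeze_zero' (.of_forall fun _ => norm_nonneg _)
    (g := fun q => C * (M * ‖q - q₀‖)) ?_ ?_)
  · filter_upwards [Metric.ball_mem_nhds q₀ one_pos] with q hq
    have hq' : ‖q‖ ≤ ‖q₀‖ + 1 := by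
      linarith [norm_sub_norm_le q q₀, mem_ball_iff_norm.1 hq]
    rw [norm_sub_rev]
    simpa using hC (G := fun _ => 1) (hcont q)
      (fun t ht => ((L t).le_of_opNorm_le (hM t ht) q).trans (by gcongr))
      (fun t => hasDerivAt_const t 1) (by positivity) fun t ht => by
        rw [zero_add, one_mul, mul_one, ← map_sub, norm_sub_rev q q₀]
        exact (L t).le_of_opNorm_le (hM t ht) _
  · have hlim : Continuous fun q => C * (M * ‖q - q₀‖) := by fun_prop
    simpa using hlim.tendsto q₀

lemma hasDerivAt_mul_transport_clm (hL : Continuous L) (hab : a ≤ b) {q : ℝ → V} {q' : V}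
    (hq : HasDerivAt q q' x) {B B' : ℝ → R} (hB : ∀ t, HasDerivAt B (B' t) t)
    (hzero : ∀ t, L t q' = B' t + B t * L t (q x) - L t (q x) * B t)
    {D : R} (hD : D * B b = B a * D) :
    HasDerivAt (fun y => D * transport (fun t => L t (q y)) a b)
      (B a * (D * transport (fun t => L t (q x)) a b)
        - D * transport (fun t => L t (q x)) a b * B a) x := by
  obtain ⟨M, hM⟩ := isCompact_Icc.exists_bound_of_continuousOn (hL.continuousOn (s := Icc a b))
  have hM₀ : 0 ≤ M := (norm_nonneg _).trans (hM a ⟨le_rfl, hab⟩)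
  have hcont : ∀ q, ContinuousOn (fun t => L t q) (Icc a b) := fun q =>
    (hL.clm_apply continuous_const).continuousOn
  refine hasDerivAt_mul_transport hab (𝒜 := fun y t => L t (q y)) (fun y => hcont (q y)) hB
    (hcont q') (fun ε hε => ?_) hzero hD
  filter_upwards [(hasDerivAt_iff_isLittleO_nhds_zero.1 hq).def
    (show 0 < ε / (M + 1) by positivity)] with h hh t ht
  rw [← map_sub, ← map_smul, ← map_sub]
  calc ‖L t (q (x + h) - q x - h • q')‖ ≤ M * (ε / (M + 1) * ‖h‖) :=
        (L t).le_of_opNorm_le_of_le (hM t ht) hh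
    _ ≤ (M + 1) * (ε / (M + 1) * ‖h‖) := by gcongr; exact le_add_of_nonneg_right zero_le_one
    _ = ε * |h| := by rw [Real.norm_eq_abs]; field_simp

end LinearFamily

section Matrices

attribute [local instance] Matrix.linftyOpNormedRing Matrix.linftyOpNormedAlgebra

lemma hasDerivAt_matrix {n : Type*} [Finite n] {T : ℝ → Matrix n n ℝ} {T' : Matrix n n ℝ} {t : ℝ} :
    HasDerivAt T T' t ↔ ∀ i j, HasDerivAt (fun t => T t i j) (T' i j) t := by
  have := Fintype.ofFinite n
  have hpi := hasDerivAt_pi (φ := fun t i => T t i) (φ' := T') (x := t)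
  simp only [hasDerivAt_pi] at hpi
  exact hpi

variable {n : Type*} [Fintype n] {T : ℝ → Matrix n n ℝ}

lemma hasDerivAt_trace {T' : Matrix n n ℝ} {t : ℝ} (hT : HasDerivAt T T' t) :
    HasDerivAt (fun t => (T t).trace) T'.trace t :=
  HasDerivAt.fun_sum fun i _ => hasDerivAt_matrix.1 hT i i

/-- The differential equation of an isospectral deformation of matrices on the half-line. -/
def IsLax (T : ℝ → Matrix n n ℝ) : Prop :=
  ∀ x > 0, ∃ B, HasDerivAt T (B * T x - T x * B) x

lemma IsLax.trace_eq (hT : IsLax T) {x y : ℝ} (hx : 0 < x) (hy : 0 < y) :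
    (T x).trace = (T y).trace := by
  have hderiv : ∀ z ∈ Ioi (0 : ℝ), HasDerivAt (fun z => (T z).trace) 0 z := fun z hz => by
    obtain ⟨B, hB⟩ := hT z hz
    exact (hasDerivAt_trace hB).congr_deriv <| by
      rw [Matrix.trace_sub, Matrix.trace_mul_comm, sub_self]
  exact isOpen_Ioi.is_const_of_deriv_eq_zero isPreconnected_Ioi
    (fun z hz => (hderiv z hz).differentiableAt.differentiableWithinAt)
    (fun z hz => (hderiv z hz).deriv) hx hy

lemma IsLax.trace_eq_of_tendsto (hT : IsLax T) {T₀ : Matrix n n ℝ}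
    (h₀ : Tendsto T (𝓝[>] 0) (𝓝 T₀)) {x : ℝ} (hx : 0 < x) : (T x).trace = T₀.trace := by
  have htrace : Continuous fun M : Matrix n n ℝ => M.trace := continuous_id.matrix_trace
  refine tendsto_nhds_unique (tendsto_const_nhds.congr' ?_) ((htrace.tendsto _).comp h₀)
  filter_upwards [self_mem_nhdsWithin] with y hy using hT.trace_eq hx hy

lemma IsLax.mul_self (hT : IsLax T) : IsLax fun x => T x * T x := fun x hx => by
  classical
  obtain ⟨B, hB⟩ := hT x hx
  exact ⟨B, (hB.mul hB).congr_deriv (by noncomm_ring)⟩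

end Matrices

section Connection

attribute [local instance] Matrix.linftyOpNormedRing Matrix.linftyOpNormedAlgebra

/-- The infinitesimal rotation with angular velocities `p₀` and `p₁` in the two coordinate
planes. -/
def blockSkew (p₀ p₁ : ℝ) : Matrix (Fin 4) (Fin 4) ℝ :=
  !![0, -p₀, 0, 0; p₀, 0, 0, 0; 0, 0, 0, -p₁; 0, 0, p₁, 0]

/-- The matrix, in a real frame, of the radial component of the tt* connection at the point `(c, s)`
of the circle of spectral parameters, where `(a₀, a₁, a₂) = (e^{w₁ - w₀}, e^{-2w₁}, e^{2w₀})`. -/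
def radialMatrix (a₀ a₁ a₂ c s : ℝ) : Matrix (Fin 4) (Fin 4) ℝ :=
  !![a₂ * c, -(a₂ * s), a₀ * c, -(a₀ * s);
     -(a₂ * s), -(a₂ * c), a₀ * s, a₀ * c;
     a₀ * c, a₀ * s, a₁ * c, a₁ * s;
     -(a₀ * s), a₀ * c, a₁ * s, -(a₁ * c)]

lemma hasDerivAt_radialMatrix (a₀ a₁ a₂ t : ℝ) :
    HasDerivAt (fun t => radialMatrix a₀ a₁ a₂ (cos t) (sin t))
      (radialMatrix a₀ a₁ a₂ (-sin t) (cos t)) t := by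
  have hc := fun k : ℝ => (hasDerivAt_cos t).const_mul k
  have hs := fun k : ℝ => (hasDerivAt_sin t).const_mul k
  refine hasDerivAt_matrix.2 fun i j => ?_
  fin_cases i <;> fin_cases j <;>
    first | exact hc _ | exact hs _ | exact (hc _).neg | exact (hs _).neg

lemma commutator_radialMatrix_blockSkew (a₀ a₁ a₂ d₀ d₁ c s : ℝ) :
    radialMatrix a₀ a₁ a₂ c s * blockSkew d₀ d₁ - blockSkew d₀ d₁ * radialMatrix a₀ a₁ a₂ c s =
      radialMatrix ((d₁ - d₀) * a₀) (-2 * d₁ * a₁) (2 * d₀ * a₂) (-s) c := by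
  ext i j
  simp only [Matrix.sub_apply, Matrix.mul_apply, Fin.sum_univ_four]
  fin_cases i <;> fin_cases j <;> simp [blockSkew, radialMatrix] <;> ring

lemma commutator_radialMatrix_radialMatrix (a₀ a₁ a₂ c s : ℝ) :
    radialMatrix a₀ a₁ a₂ c s * radialMatrix a₀ a₁ a₂ (-s) c
        - radialMatrix a₀ a₁ a₂ (-s) c * radialMatrix a₀ a₁ a₂ c s =
      (c ^ 2 + s ^ 2) • blockSkew (2 * (a₂ ^ 2 - a₀ ^ 2)) (2 * (a₀ ^ 2 - a₁ ^ 2)) := by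
  ext i j
  simp only [Matrix.sub_apply, Matrix.smul_apply, Matrix.mul_apply, Fin.sum_univ_four]
  fin_cases i <;> fin_cases j <;> simp [blockSkew, radialMatrix] <;> ring

/-- The angular component of the tt* connection at the angle `t`, as a linear function of its
coefficients; see `coefficients` for their meaning. -/
noncomputable def connection (t : ℝ) : (Fin 5 → ℝ) →L[ℝ] Matrix (Fin 4) (Fin 4) ℝ :=
  LinearMap.toContinuousLinearMap
    { toFun := fun q =>
        blockSkew (q 0) (q 1) + radialMatrix (q 2) (q 3) (q 4) (-sin t) (cos t)
      map_add' := fun q q' => by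
        ext i j
        fin_cases i <;> fin_cases j <;> simp [blockSkew, radialMatrix] <;> ring
      map_smul' := fun k q => by
        ext i j
        fin_cases i <;> fin_cases j <;> simp [blockSkew, radialMatrix] <;> ring }

lemma connection_apply (t : ℝ) (q : Fin 5 → ℝ) : connection t q =
    blockSkew (q 0) (q 1) + radialMatrix (q 2) (q 3) (q 4) (-sin t) (cos t) := rfl

lemma continuous_connection : Continuous connection := by
  refine continuous_clm_apply.2 fun q => continuous_const.add (continuous_matrix fun i j => ?_)
  fin_cases i <;> fin_cases j <;> simp [radialMatrix] <;> fun_prop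

/-- The block diagonal matrix of the rotations of the plane by the angles `α` and `β`. -/
noncomputable def blockRotation (α β : ℝ) : Matrix (Fin 4) (Fin 4) ℝ :=
  !![cos α, -sin α, 0, 0; sin α, cos α, 0, 0; 0, 0, cos β, -sin β; 0, 0, sin β, cos β]

lemma blockRotation_zero : blockRotation 0 0 = 1 := by
  ext i j
  fin_cases i <;> fin_cases j <;> simp [blockRotation]

lemma blockRotation_mul (α β α' β' : ℝ) :
    blockRotation α β * blockRotation α' β' = blockRotation (α + α') (β + β') := by
  ext i j
  simp only [Matrix.mul_apply, Fin.sum_univ_four]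
  fin_cases i <;> fin_cases j <;> simp [blockRotation, cos_add, sin_add] <;> ring

lemma trace_blockRotation (α β : ℝ) : (blockRotation α β).trace = 2 * cos α + 2 * cos β := by
  simp [blockRotation, Matrix.trace, Fin.sum_univ_four]
  ring

lemma blockRotation_pi_div_four : blockRotation (π / 4) (3 * π / 4) =
    (√2 / 2) • !![1, -1, 0, 0; 1, 1, 0, 0; 0, 0, -1, -1; 0, 0, 1, -1] := by
  have hc : cos (3 * π / 4) = -(√2 / 2) := by
    rw [show 3 * π / 4 = π - π / 4 by ring, cos_pi_sub, cos_pi_div_four]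
  have hs : sin (3 * π / 4) = √2 / 2 := by
    rw [show 3 * π / 4 = π - π / 4 by ring, sin_pi_sub, sin_pi_div_four]
  ext i j
  fin_cases i <;> fin_cases j <;> simp [blockRotation, hc, hs]

lemma blockRotation_mul_radialMatrix (a₀ a₁ a₂ : ℝ) (c s : ℝ) :
    blockRotation (π / 4) (3 * π / 4) * radialMatrix a₀ a₁ a₂ (-s) c =
      radialMatrix a₀ a₁ a₂ c s * blockRotation (π / 4) (3 * π / 4) := by
  rw [blockRotation_pi_div_four, smul_mul_assoc, mul_smul_comm]
  congr 1
  ext i j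
  simp only [Matrix.mul_apply, Fin.sum_univ_four]
  fin_cases i <;> fin_cases j <;> simp [radialMatrix] <;> ring

lemma blockSkew_mul_blockRotation (p₀ p₁ α β : ℝ) : blockSkew p₀ p₁ * blockRotation α β =
    !![-sin α * p₀, -(cos α * p₀), 0, 0; cos α * p₀, -sin α * p₀, 0, 0;
       0, 0, -sin β * p₁, -(cos β * p₁); 0, 0, cos β * p₁, -sin β * p₁] := by
  ext i j
  simp only [Matrix.mul_apply, Fin.sum_univ_four]
  fin_cases i <;> fin_cases j <;> simp [blockSkew, blockRotation, mul_comm]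

lemma hasDerivAt_blockRotation {α β : ℝ → ℝ} {α' β' t : ℝ} (hα : HasDerivAt α α' t)
    (hβ : HasDerivAt β β' t) : HasDerivAt (fun t => blockRotation (α t) (β t))
      (blockSkew α' β' * blockRotation (α t) (β t)) t := by
  rw [blockSkew_mul_blockRotation]
  refine hasDerivAt_matrix.2 fun i j => ?_
  fin_cases i <;> fin_cases j
  exacts [hα.cos, hα.sin.neg, hasDerivAt_const _ _, hasDerivAt_const _ _,
    hα.sin, hα.cos, hasDerivAt_const _ _, hasDerivAt_const _ _,
    hasDerivAt_const _ _, hasDerivAt_const _ _, hβ.cos, hβ.sin.neg,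
    hasDerivAt_const _ _, hasDerivAt_const _ _, hβ.sin, hβ.cos]

/-- The coefficients at radius `x` of the angular component of the tt* connection of a solution. -/
noncomputable def coefficients (w₀ w₀' w₁ w₁' : ℝ → ℝ) (x : ℝ) : Fin 5 → ℝ :=
  ![x * w₀' x, x * w₁' x, x * exp (w₁ x - w₀ x), x * exp (-(2 * w₁ x)), x * exp (2 * w₀ x)]

/-- The holonomy of the angular connection over a quarter of the circle. The symmetry of order
four of the radial component, a block rotation, identifies the fibres at the two ends. -/
noncomputable def holonomy (q : Fin 5 → ℝ) : Matrix (Fin 4) (Fin 4) ℝ :=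
  blockRotation (π / 4) (3 * π / 4) * transport (fun t => connection t q) (-(π / 8)) (3 * π / 8)

lemma neg_pi_div_eight_le : -(π / 8) ≤ 3 * π / 8 := by linarith [pi_pos]

lemma continuous_holonomy : Continuous holonomy :=
  continuous_const.mul (continuous_transport_clm continuous_connection neg_pi_div_eight_le)

lemma holonomy_of_eq_zero (p₀ p₁ : ℝ) : holonomy ![p₀, p₁, 0, 0, 0] =
    blockRotation (π * (2 * p₀ + 1) / 4) (π * (2 * p₁ + 3) / 4) := by
  have hconn : ∀ t, connection t ![p₀, p₁, 0, 0, 0] = blockSkew p₀ p₁ := fun t => by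
    rw [connection_apply]
    ext i j
    fin_cases i <;> fin_cases j <;> simp [blockSkew, radialMatrix]
  have hlin : ∀ p t : ℝ, HasDerivAt (fun t => p * (t - -(π / 8))) p t := fun p t =>
    (((hasDerivAt_id t).sub_const _).const_mul p).congr_deriv (mul_one p)
  have htransport := transport_eq (A := fun t => connection t ![p₀, p₁, 0, 0, 0])
    (Ψ := fun t => blockRotation (p₀ * (t - -(π / 8))) (p₁ * (t - -(π / 8))))
    (continuous_connection.clm_apply continuous_const).continuousOn neg_pi_div_eight_le
    (fun t => (hasDerivAt_blockRotation (hlin p₀ t) (hlin p₁ t)).congr_deriv (by rw [hconn]))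
    (by simp [blockRotation_zero])
  rw [holonomy, htransport, blockRotation_mul]
  congr 1 <;> ring

/-- The radial derivative of the coefficients `![d₀, d₁, x * a₀, x * a₁, x * a₂]` at radius `x`
along a solution. -/
def coefficientsDeriv (d₀ d₁ a₀ a₁ a₂ x : ℝ) : Fin 5 → ℝ :=
  ![2 * x * (a₂ ^ 2 - a₀ ^ 2), 2 * x * (a₀ ^ 2 - a₁ ^ 2),
    a₀ + (d₁ - d₀) * a₀, a₁ + -2 * d₁ * a₁, a₂ + 2 * d₀ * a₂]

-- The zero curvature equation of the tt* connection.
lemma connection_coefficientsDeriv (t d₀ d₁ a₀ a₁ a₂ x : ℝ) :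
    connection t (coefficientsDeriv d₀ d₁ a₀ a₁ a₂ x) =
      radialMatrix a₀ a₁ a₂ (-sin t) (cos t)
        + radialMatrix a₀ a₁ a₂ (cos t) (sin t)
          * connection t ![d₀, d₁, x * a₀, x * a₁, x * a₂]
        - connection t ![d₀, d₁, x * a₀, x * a₁, x * a₂]
          * radialMatrix a₀ a₁ a₂ (cos t) (sin t) := by
  have hconn : connection t ![d₀, d₁, x * a₀, x * a₁, x * a₂] =
      blockSkew d₀ d₁ + x • radialMatrix a₀ a₁ a₂ (-sin t) (cos t) := by
    rw [connection_apply]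
    congr 1
    ext i j
    fin_cases i <;> fin_cases j <;> simp [radialMatrix, mul_assoc]
  have hskew := commutator_radialMatrix_blockSkew a₀ a₁ a₂ d₀ d₁ (cos t) (sin t)
  have hradial := commutator_radialMatrix_radialMatrix a₀ a₁ a₂ (cos t) (sin t)
  rw [cos_sq_add_sin_sq, one_smul] at hradial
  rw [add_sub_assoc, hconn, mul_add, add_mul, mul_smul_comm, smul_mul_assoc, add_sub_add_comm,
    hskew, ← smul_sub, hradial, connection_apply]
  ext i j
  fin_cases i <;> fin_cases j <;> simp [coefficientsDeriv, blockSkew, radialMatrix] <;> ring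

namespace IsSolution

variable {w₀ w₀' w₁ w₁' : ℝ → ℝ} {γ₀ γ₁ : ℝ}

lemma hasDerivAt_coefficients (H : IsSolution w₀ w₀' w₁ w₁') {x : ℝ} (hx : 0 < x) :
    HasDerivAt (coefficients w₀ w₀' w₁ w₁')
      (coefficientsDeriv (x * w₀' x) (x * w₁' x) (exp (w₁ x - w₀ x)) (exp (-(2 * w₁ x)))
        (exp (2 * w₀ x)) x) x := by
  have hmul : ∀ {f : ℝ → ℝ} {f' k : ℝ}, HasDerivAt f f' x → x * f' = k →
      HasDerivAt (fun x => x * exp (f x)) (exp (f x) + k * exp (f x)) x := fun hf hk =>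
    ((hasDerivAt_id x).mul hf.exp).congr_deriv (by simp only [id, ← hk]; ring)
  have hw₀ := H.laplacian₀.hasDerivAt x hx
  have hw₁ := H.laplacian₁.hasDerivAt x hx
  refine hasDerivAt_pi.2 fun i => ?_
  fin_cases i
  · refine (H.laplacian₀.hasDerivAt_id_mul_deriv hx).congr_deriv ?_
    simp [coefficientsDeriv, ← exp_nat_mul]
    ring_nf
  · refine (H.laplacian₁.hasDerivAt_id_mul_deriv hx).congr_deriv ?_
    simp [coefficientsDeriv, ← exp_nat_mul]
    ring_nf
  · exact hmul (hw₁.sub hw₀) (by ring)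
  · exact hmul (hw₁.const_mul 2).neg (by ring)
  · exact hmul (hw₀.const_mul 2) (by ring)

lemma isLax_holonomy (H : IsSolution w₀ w₀' w₁ w₁') :
    IsLax fun x => holonomy (coefficients w₀ w₀' w₁ w₁' x) := fun x hx =>
  ⟨_, hasDerivAt_mul_transport_clm continuous_connection neg_pi_div_eight_le
    (H.hasDerivAt_coefficients hx) (hasDerivAt_radialMatrix _ _ _)
    (connection_coefficientsDeriv · _ _ _ _ _ _) (by
      have hcos : cos (3 * π / 8) = -sin (-(π / 8)) := by
        rw [sin_neg, neg_neg, ← cos_pi_div_two_sub]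
        ring_nf
      have hsin : sin (3 * π / 8) = cos (-(π / 8)) := by
        rw [cos_neg, ← sin_pi_div_two_sub]
        ring_nf
      rw [hcos, hsin, blockRotation_mul_radialMatrix])⟩

lemma tendsto_coefficients_nhdsGT_zero (H : IsSolution w₀ w₀' w₁ w₁') (hγ₀ : -1 < γ₀)
    (hγ₁ : γ₁ < 1) (hγ : γ₀ - 2 < γ₁)
    (h₀ : Tendsto (fun r => 2 * w₀ r / log r) (𝓝[>] 0) (𝓝 γ₀))
    (h₁ : Tendsto (fun r => 2 * w₁ r / log r) (𝓝[>] 0) (𝓝 γ₁)) :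
    Tendsto (coefficients w₀ w₀' w₁ w₁') (𝓝[>] 0) (𝓝 ![γ₀ / 2, γ₁ / 2, 0, 0, 0]) := by
  obtain ⟨hd₀, hd₁⟩ := H.tendsto_id_mul_deriv_nhdsGT_zero hγ₀ hγ₁ hγ h₀ h₁
  refine tendsto_pi_nhds.2 fun i => ?_
  fin_cases i
  · exact hd₀
  · exact hd₁
  · exact tendsto_mul_exp_nhdsGT_zero (c := (γ₁ - γ₀) / 2)
      (((h₁.sub h₀).div_const 2).congr fun r => by ring) (by linarith)
  · exact tendsto_mul_exp_nhdsGT_zero (c := -γ₁) (h₁.neg.congr fun r => by ring) (by linarith)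
  · exact tendsto_mul_exp_nhdsGT_zero h₀ hγ₀

theorem trace_holonomy (H : IsSolution w₀ w₀' w₁ w₁') (hγ₀ : -1 < γ₀)
    (hγ₁ : γ₁ < 1) (hγ : γ₀ - 2 < γ₁)
    (h₀ : Tendsto (fun r => 2 * w₀ r / log r) (𝓝[>] 0) (𝓝 γ₀))
    (h₁ : Tendsto (fun r => 2 * w₁ r / log r) (𝓝[>] 0) (𝓝 γ₁)) {x : ℝ} (hx : 0 < x) :
    (holonomy (coefficients w₀ w₀' w₁ w₁' x)).trace =
        2 * cos (π * (γ₀ + 1) / 4) + 2 * cos (π * (γ₁ + 3) / 4) ∧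
      (holonomy (coefficients w₀ w₀' w₁ w₁' x) * holonomy (coefficients w₀ w₀' w₁ w₁' x)).trace =
        4 * cos (π * (γ₀ + 1) / 4) ^ 2 + 4 * cos (π * (γ₁ + 3) / 4) ^ 2 - 4 := by
  have hlim : Tendsto (fun x => holonomy (coefficients w₀ w₀' w₁ w₁' x)) (𝓝[>] 0)
      (𝓝 (blockRotation (π * (γ₀ + 1) / 4) (π * (γ₁ + 3) / 4))) := by
    have h := (continuous_holonomy.tendsto _).comp
      (H.tendsto_coefficients_nhdsGT_zero hγ₀ hγ₁ hγ h₀ h₁)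
    rwa [holonomy_of_eq_zero, mul_div_cancel₀ _ two_ne_zero, mul_div_cancel₀ _ two_ne_zero] at h
  refine ⟨?_, ?_⟩
  · rw [H.isLax_holonomy.trace_eq_of_tendsto hlim hx, trace_blockRotation]
  · rw [H.isLax_holonomy.mul_self.trace_eq_of_tendsto (hlim.mul hlim) hx, blockRotation_mul,
      trace_blockRotation, ← two_mul, ← two_mul, cos_two_mul, cos_two_mul]
    ring

end IsSolution

end Connection

/-! ### Laplace's method on boundary layers -/

section Laplace

lemma tendsto_mul_cos_div_sqrt_sub_one (y : ℝ) :
    Tendsto (fun x => x * (cos (y / √x) - 1)) atTop (𝓝 (-(y ^ 2 / 2))) := by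
  rw [tendsto_iff_norm_sub_tendsto_zero]
  have hlim : Tendsto (fun x : ℝ => y ^ 4 * (5 / 96) / x) atTop (𝓝 0) :=
    tendsto_const_nhds.div_atTop tendsto_id
  refine squeeze_zero' (.of_forall fun _ => norm_nonneg _) ?_ hlim
  filter_upwards [eventually_gt_atTop 0, eventually_ge_atTop (y ^ 2)] with x hx hxy
  have hsqrt : 0 < √x := sqrt_pos.2 hx
  have hsq : √x ^ 2 = x := sq_sqrt hx.le
  have hle : |y / √x| ≤ 1 := by
    rw [abs_div, abs_of_pos hsqrt, div_le_one hsqrt]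
    exact abs_le_sqrt hxy
  have hpow : |y / √x| ^ 4 = y ^ 4 / x ^ 2 := by
    rw [← abs_pow, div_pow, abs_of_nonneg (by positivity), show √x ^ 4 = (√x ^ 2) ^ 2 by ring, hsq]
  calc ‖x * (cos (y / √x) - 1) - -(y ^ 2 / 2)‖
      = x * |cos (y / √x) - (1 - (y / √x) ^ 2 / 2)| := by
        rw [div_pow, hsq, Real.norm_eq_abs, ← abs_of_pos hx, ← abs_mul, abs_of_pos hx]
        congr 1
        field_simp
        ring
    _ ≤ x * (|y / √x| ^ 4 * (5 / 96)) := by gcongr; exact cos_bound hle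
    _ = y ^ 4 * (5 / 96) / x := by rw [hpow]; field_simp

lemma exp_mul_cos_div_sqrt_sub_one_le {k x y : ℝ} (hk : 0 < k) (hx : 0 < x)
    (hy : |y / √x| ≤ π) :
    exp (k * x * (cos (y / √x) - 1)) ≤ exp (-(k * (2 / π ^ 2)) * y ^ 2) := by
  have hcos : cos (y / √x) - 1 ≤ -(2 / π ^ 2 * (y / √x) ^ 2) := by
    linarith [cos_le_one_sub_mul_cos_sq hy]
  rw [exp_le_exp]
  calc k * x * (cos (y / √x) - 1) ≤ k * x * -(2 / π ^ 2 * (y / √x) ^ 2) := by gcongr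
    _ = -(k * (2 / π ^ 2)) * y ^ 2 := by
        rw [div_pow, sq_sqrt hx.le]
        field_simp

variable {k a b : ℝ} {f : ℝ → ℝ}

lemma tendsto_indicator_exp_mul_cos_div_sqrt (ha : a < 0) (hb : 0 < b) (hf : Continuous f)
    (y : ℝ) : Tendsto (fun x => (Ioc (√x * a) (√x * b)).indicator
      (fun y => exp (k * x * (cos (y / √x) - 1)) * f (y / √x)) y) atTop
      (𝓝 (exp (-(k / 2) * y ^ 2) * f 0)) := by
  have hexp := ((tendsto_mul_cos_div_sqrt_sub_one y).const_mul k).rexp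
  have hf₀ := (hf.tendsto 0).comp (tendsto_const_nhds (x := y).div_atTop tendsto_sqrt_atTop)
  rw [show k * -(y ^ 2 / 2) = -(k / 2) * y ^ 2 by ring] at hexp
  refine (hexp.mul hf₀).congr' ?_
  filter_upwards [(tendsto_sqrt_atTop.atTop_mul_const_of_neg ha).eventually_lt_atBot y,
    (tendsto_sqrt_atTop.atTop_mul_const hb).eventually_ge_atTop y] with x hxa hxb
  rw [indicator_of_mem (show y ∈ Ioc (√x * a) (√x * b) from ⟨hxa, hxb⟩), mul_assoc k]
  rfl

lemma norm_indicator_exp_mul_cos_div_sqrt_le (hk : 0 < k) (ha : -π ≤ a) (hb : b ≤ π) {M x : ℝ}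
    (hM₀ : 0 ≤ M) (hM : ∀ t ∈ Icc (-π) π, ‖f t‖ ≤ M) (hx : 0 < x) (y : ℝ) :
    ‖(Ioc (√x * a) (√x * b)).indicator
      (fun y => exp (k * x * (cos (y / √x) - 1)) * f (y / √x)) y‖ ≤
      exp (-(k * (2 / π ^ 2)) * y ^ 2) * M := by
  by_cases hy : y ∈ Ioc (√x * a) (√x * b)
  · have hsqrt : 0 < √x := sqrt_pos.2 hx
    have hyπ : |y / √x| ≤ π := abs_le.2
      ⟨ha.trans ((le_div_iff₀' hsqrt).2 hy.1.le), ((div_le_iff₀' hsqrt).2 hy.2).trans hb⟩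
    rw [indicator_of_mem hy, norm_mul, Real.norm_of_nonneg (exp_pos _).le]
    exact mul_le_mul (exp_mul_cos_div_sqrt_sub_one_le hk hx hyπ) (hM _ (abs_le.1 hyπ))
      (norm_nonneg _) (exp_pos _).le
  · rw [indicator_of_notMem hy, norm_zero]
    positivity

-- Laplace's method: after the substitution `t = y / √x` the integrand converges to a Gaussian.
lemma tendsto_sqrt_mul_integral_exp_mul_cos_sub_one (hk : 0 < k) (ha : a < 0) (hb : 0 < b)
    (ha' : -π ≤ a) (hb' : b ≤ π) (hf : Continuous f) :
    Tendsto (fun x => √x * ∫ t in a..b, exp (k * x * (cos t - 1)) * f t) atTop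
      (𝓝 (√(2 * π / k) * f 0)) := by
  obtain ⟨M, hM⟩ := isCompact_Icc.exists_bound_of_continuousOn (s := Icc (-π) π) hf.continuousOn
  have hM₀ : 0 ≤ M := (norm_nonneg _).trans (hM 0 ⟨by linarith, by linarith⟩)
  have hgauss : ∫ y, exp (-(k / 2) * y ^ 2) * f 0 = √(2 * π / k) * f 0 := by
    rw [MeasureTheory.integral_mul_const, integral_gaussian]
    congr 2
    field_simp
  rw [← hgauss]
  refine (MeasureTheory.tendsto_integral_filter_of_dominated_convergence
    (fun y => exp (-(k * (2 / π ^ 2)) * y ^ 2) * M) (.of_forall fun x => ?_)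
    ((eventually_gt_atTop 0).mono fun x hx => .of_forall
      (norm_indicator_exp_mul_cos_div_sqrt_le hk ha' hb' hM₀ hM hx))
    ((integrable_exp_neg_mul_sq (by positivity)).mul_const M)
    (.of_forall (tendsto_indicator_exp_mul_cos_div_sqrt ha hb hf))).congr' ?_
  · have hcont : Continuous fun y => exp (k * x * (cos (y / √x) - 1)) * f (y / √x) := by fun_prop
    exact (hcont.measurable.indicator measurableSet_Ioc).aestronglyMeasurable
  · filter_upwards [eventually_gt_atTop 0] with x hx
    have hsqrt : 0 < √x := sqrt_pos.2 hx
    rw [MeasureTheory.integral_indicator measurableSet_Ioc,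
      ← intervalIntegral.integral_of_le (by gcongr; linarith),
      intervalIntegral.integral_comp_div (fun t => exp (k * x * (cos t - 1)) * f t) hsqrt.ne',
      smul_eq_mul, mul_div_cancel_left₀ _ hsqrt.ne', mul_div_cancel_left₀ _ hsqrt.ne']

/-- The profile, at `θ = cos t`, of an entry of the angular connection of a decaying solution. For
large `x` it concentrates at `θ = 1`. -/
noncomputable def boundaryLayer (k x α β θ : ℝ) : ℝ := √x * exp (k * x * (θ - 1)) * (α + β * θ)

lemma continuous_boundaryLayer (k x α β : ℝ) : Continuous (boundaryLayer k x α β) := by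
  unfold boundaryLayer
  fun_prop

lemma tendsto_integral_boundaryLayer {c : ℝ} (hk : 0 < k) (ha : a < c) (hb : c < b)
    (ha' : -π ≤ a - c) (hb' : b - c ≤ π) {α β : ℝ → ℝ} {α₀ β₀ : ℝ}
    (hα : Tendsto α atTop (𝓝 α₀)) (hβ : Tendsto β atTop (𝓝 β₀)) :
    Tendsto (fun x => ∫ t in a..b, boundaryLayer k x (α x) (β x) (cos (t - c))) atTop
      (𝓝 (√(2 * π / k) * (α₀ + β₀))) := by
  have hone := tendsto_sqrt_mul_integral_exp_mul_cos_sub_one hk (sub_neg.2 ha) (sub_pos.2 hb)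
    ha' hb' (continuous_const (y := (1 : ℝ)))
  have hcos := tendsto_sqrt_mul_integral_exp_mul_cos_sub_one hk (sub_neg.2 ha) (sub_pos.2 hb)
    ha' hb' continuous_cos
  have hsum := (hα.mul hone).add (hβ.mul hcos)
  rw [cos_zero, mul_one, ← add_mul, mul_comm] at hsum
  refine hsum.congr fun x => ?_
  rw [intervalIntegral.integral_comp_sub_right (fun t => boundaryLayer k x (α x) (β x) (cos t)) c,
    ← intervalIntegral.integral_const_mul, ← intervalIntegral.integral_const_mul,
    ← intervalIntegral.integral_const_mul, ← intervalIntegral.integral_const_mul,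
    ← intervalIntegral.integral_add]
  · congr 1
    ext t
    rw [boundaryLayer]
    ring
  all_goals exact Continuous.intervalIntegrable (by fun_prop) _ _

lemma abs_boundaryLayer_le {x α β θ κ C : ℝ} (hx : 0 ≤ x) (hθ : |θ| ≤ 1) (hκ : κ ≤ k * (1 - θ))
    (hC : |α| + |β| ≤ C) : |boundaryLayer k x α β θ| ≤ √x * exp (-κ * x) * C := by
  rw [boundaryLayer, abs_mul, abs_of_nonneg (by positivity)]
  gcongr ?_ * ?_ * ?_
  · rw [exp_le_exp]
    linarith [mul_le_mul_of_nonneg_right hκ hx]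
  · calc |α + β * θ| ≤ |α| + |β| * |θ| := (abs_add_le _ _).trans_eq (by rw [abs_mul])
      _ ≤ |α| + |β| := by gcongr; exact mul_le_of_le_one_right (abs_nonneg β) hθ
      _ ≤ C := hC

lemma abs_boundaryLayer_le_sqrt_mul {x α β θ C : ℝ} (hk : 0 ≤ k) (hx : 0 ≤ x) (hθ : |θ| ≤ 1)
    (hC : |α| + |β| ≤ C) : |boundaryLayer k x α β θ| ≤ √x * C := by
  have hκ : 0 ≤ k * (1 - θ) := mul_nonneg hk (sub_nonneg.2 (le_of_abs_le hθ))
  simpa using abs_boundaryLayer_le hx hθ hκ hC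

end Laplace

/-! ### Holonomy at infinity -/

section Gauge

attribute [local instance] Matrix.linftyOpNormedRing Matrix.linftyOpNormedAlgebra

/-- The orthogonal change of frame diagonalising the tt* connection of the solution `(0, 0)`. -/
noncomputable def eigenframe : Matrix (Fin 4) (Fin 4) ℝ :=
  !![√2 / 2, 0, √2 / 2, 0; 1 / 2, 1 / 2, -(1 / 2), 1 / 2;
     0, √2 / 2, 0, -(√2 / 2); -(1 / 2), 1 / 2, 1 / 2, 1 / 2]

/-- The symmetry of order four of the tt* connection in the frame `eigenframe`. -/
def signedCycle : Matrix (Fin 4) (Fin 4) ℝ :=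
  !![0, 0, 0, -1; 1, 0, 0, 0; 0, 1, 0, 0; 0, 0, 1, 0]

/-- The general form, in the frame `eigenframe`, of the angular component of the tt* connection. -/
noncomputable def stokesConnection (F H : ℝ → ℝ) (b t : ℝ) : Matrix (Fin 4) (Fin 4) ℝ :=
  !![-(2 * b * sin t), -F (-cos (t - π / 4)), -H (-cos t), -F (-cos (t + π / 4));
     F (cos (t - π / 4)), -(2 * b * cos t), -F (-cos (t + π / 4)), -H (sin t);
     H (cos t), F (cos (t + π / 4)), 2 * b * sin t, -F (cos (t - π / 4));
     F (cos (t + π / 4)), H (-sin t), F (-cos (t - π / 4)), 2 * b * cos t]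

lemma eigenframe_mul_transpose : eigenframe * eigenframe.transpose = 1 := by
  have hsq : √2 * √2 = 2 := mul_self_sqrt zero_le_two
  ext i j
  rw [Matrix.mul_apply, Fin.sum_univ_four]
  fin_cases i <;> fin_cases j <;> simp [eigenframe] <;> grind

lemma eigenframe_mul_blockRotation :
    eigenframe * blockRotation (π / 4) (3 * π / 4) = signedCycle * eigenframe := by
  have hsq : √2 * √2 = 2 := mul_self_sqrt zero_le_two
  rw [blockRotation_pi_div_four]
  ext i j
  simp only [Matrix.mul_apply, Fin.sum_univ_four, Matrix.smul_apply]
  fin_cases i <;> fin_cases j <;> simp [eigenframe, signedCycle] <;> grind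

lemma eigenframe_mul_connection (P Q V W b t : ℝ) :
    eigenframe * connection t ![√2 * P + V, √2 * P - V, b + W / 2, b - W / 2 + Q, b - W / 2 - Q] =
      stokesConnection (fun θ => P + Q * θ) (fun θ => V + W * θ) b t * eigenframe := by
  have hsq : √2 * √2 = 2 := mul_self_sqrt zero_le_two
  rw [connection_apply]
  ext i j
  simp only [Matrix.mul_apply, Matrix.add_apply, Fin.sum_univ_four]
  fin_cases i <;> fin_cases j <;>
    simp [eigenframe, stokesConnection, blockSkew, radialMatrix, cos_add, cos_sub] <;> grind

/-- The exponents of the solution `exp (phase x t i)`, in the frame `eigenframe`, of the equation of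
parallel transport of the solution `(0, 0)`. -/
noncomputable def phase (x t : ℝ) : Fin 4 → ℝ :=
  ![-(2 * x * cos t), 2 * x * sin t, 2 * x * cos t, -(2 * x * sin t)]

lemma hasDerivAt_phase (x t : ℝ) (i : Fin 4) :
    HasDerivAt (fun t => phase x t i) (phase x (t + π / 2) i) t := by
  have hc := (hasDerivAt_cos t).const_mul (2 * x)
  have hs := (hasDerivAt_sin t).const_mul (2 * x)
  rw [phase, cos_add_pi_div_two, sin_add_pi_div_two]
  fin_cases i
  exacts [hc.neg, hs, hc, hs.neg.congr_deriv (by simp)]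

/-- The diagonal gauge transformation removing the exponential growth of parallel transport. -/
noncomputable def gauge (x t : ℝ) : Matrix (Fin 4) (Fin 4) ℝ :=
  Matrix.diagonal (fun i => exp (phase x t i)) * eigenframe

lemma isUnit_gauge (x t : ℝ) : IsUnit (gauge x t) := by
  refine IsUnit.mul ?_ (IsUnit.of_mul_eq_one _ eigenframe_mul_transpose)
  refine IsUnit.of_mul_eq_one (Matrix.diagonal fun i => exp (-phase x t i)) ?_
  simp [Matrix.diagonal_mul_diagonal, ← exp_add]

lemma hasDerivAt_gauge (x t : ℝ) :
    HasDerivAt (gauge x) (Matrix.diagonal (phase x (t + π / 2)) * gauge x t) t := by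
  have hdiag : HasDerivAt (fun t => Matrix.diagonal fun i => exp (phase x t i))
      (Matrix.diagonal (phase x (t + π / 2)) * Matrix.diagonal fun i => exp (phase x t i)) t := by
    rw [Matrix.diagonal_mul_diagonal]
    refine hasDerivAt_matrix.2 fun i j => ?_
    rcases eq_or_ne i j with rfl | hij
    · simpa only [Matrix.diagonal_apply_eq, mul_comm] using (hasDerivAt_phase x t i).exp
    · simpa only [Matrix.diagonal_apply_ne _ hij] using hasDerivAt_const t (0 : ℝ)
  exact (hdiag.mul_const eigenframe).congr_deriv (mul_assoc _ _ _)

lemma gauge_mul_blockRotation (x t : ℝ) : gauge x t * blockRotation (π / 4) (3 * π / 4) =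
    signedCycle * gauge x (t + π / 2) := by
  have hcycle : Matrix.diagonal (fun i => exp (phase x t i)) * signedCycle =
      signedCycle * Matrix.diagonal fun i => exp (phase x (t + π / 2) i) := by
    ext i j
    rw [Matrix.diagonal_mul, Matrix.mul_diagonal, phase, phase, cos_add_pi_div_two,
      sin_add_pi_div_two]
    fin_cases i <;> fin_cases j <;> simp [signedCycle]
  rw [gauge, gauge, mul_assoc, eigenframe_mul_blockRotation, ← mul_assoc, hcycle, mul_assoc]

lemma diagonal_phase_mul_stokesConnection (F H : ℝ → ℝ) (b x t : ℝ) :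
    Matrix.diagonal (phase x (t + π / 2)) * Matrix.diagonal (fun i => exp (phase x t i))
        + Matrix.diagonal (fun i => exp (phase x t i)) * stokesConnection F H b t =
      stokesConnection (fun θ => exp (2 * √2 * x * θ) * F θ) (fun θ => exp (4 * x * θ) * H θ)
        (b - x) t * Matrix.diagonal fun i => exp (phase x t i) := by
  have hsq : √2 * √2 = 2 := mul_self_sqrt zero_le_two
  have hsub : √2 * cos (t - π / 4) = cos t + sin t := by
    rw [cos_sub, cos_pi_div_four, sin_pi_div_four]
    grind
  have hadd : √2 * cos (t + π / 4) = cos t - sin t := by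
    rw [cos_add, cos_pi_div_four, sin_pi_div_four]
    grind
  have hexp : ∀ {u v w : ℝ} (f : ℝ), w = u + v → exp w * f = exp u * f * exp v := fun f h => by
    rw [h, exp_add, mul_right_comm]
  ext i j
  rw [Matrix.add_apply, Matrix.diagonal_mul_diagonal, Matrix.diagonal_mul, Matrix.mul_diagonal,
    phase, phase, cos_add_pi_div_two, sin_add_pi_div_two]
  fin_cases i <;> fin_cases j <;> simp [stokesConnection] <;>
    first | ring1 | exact hexp _ (by grind)

lemma continuous_stokesConnection {F H : ℝ → ℝ} (hF : Continuous F) (hH : Continuous H) (b : ℝ) :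
    Continuous (stokesConnection F H b) := by
  refine continuous_matrix fun i j => ?_
  fin_cases i <;> fin_cases j <;> simp [stokesConnection] <;> fun_prop

/-- The holonomy of the connection of a solution close to `(0, 0)`, after removal of the holonomy
of the solution `(0, 0)` by `gauge`. -/
noncomputable def stokesTransport (F H : ℝ → ℝ) (b : ℝ) : Matrix (Fin 4) (Fin 4) ℝ :=
  transport (stokesConnection F H b) (-(π / 8)) (3 * π / 8)

lemma diagonal_phase_mul_gauge (P Q V W b x t : ℝ) :
    Matrix.diagonal (phase x (t + π / 2)) * gauge x t + gauge x t *
        connection t ![√2 * P + V, √2 * P - V, b + W / 2, b - W / 2 + Q, b - W / 2 - Q] =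
      stokesConnection (fun θ => exp (2 * √2 * x * θ) * (P + Q * θ))
        (fun θ => exp (4 * x * θ) * (V + W * θ)) (b - x) t * gauge x t := by
  rw [gauge, mul_assoc _ eigenframe, eigenframe_mul_connection, ← mul_assoc, ← mul_assoc,
    ← add_mul, diagonal_phase_mul_stokesConnection, mul_assoc]

lemma semiconjBy_gauge_holonomy (P Q V W b x : ℝ) : SemiconjBy (gauge x (-(π / 8)))
    (holonomy ![√2 * P + V, √2 * P - V, b + W / 2, b - W / 2 + Q, b - W / 2 - Q])
    (signedCycle * stokesTransport (fun θ => exp (2 * √2 * x * θ) * (P + Q * θ))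
      (fun θ => exp (4 * x * θ) * (V + W * θ)) (b - x)) := by
  have htransport := mul_transport_eq_transport_mul
    (continuous_connection.clm_apply continuous_const).continuousOn
    (continuous_stokesConnection (F := fun θ => exp (2 * √2 * x * θ) * (P + Q * θ))
      (H := fun θ => exp (4 * x * θ) * (V + W * θ)) (by fun_prop) (by fun_prop)
      (b - x)).continuousOn neg_pi_div_eight_le (hasDerivAt_gauge x)
    (diagonal_phase_mul_gauge P Q V W b x)
  rw [SemiconjBy, holonomy, ← mul_assoc, gauge_mul_blockRotation, mul_assoc,
    show -(π / 8) + π / 2 = 3 * π / 8 by ring]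
  exact (congrArg (signedCycle * ·) htransport).trans (mul_assoc _ _ _).symm

lemma trace_eq_of_semiconjBy {n : Type*} [Fintype n] [DecidableEq n] {G T T' : Matrix n n ℝ}
    (hG : IsUnit G) (h : SemiconjBy G T T') : T.trace = T'.trace := by
  obtain ⟨U, rfl⟩ := hG
  rw [← Matrix.trace_units_conj U T, h.eq, mul_assoc, U.mul_inv, mul_one]

end Gauge

section Nilpotent

variable {R : Type*} [NormedRing R] [NormedAlgebra ℝ R] [CompleteSpace R] {a b : ℝ}

-- As the values of `N` annihilate each other, `1 + ∫ N` is the transport along `N`.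
lemma norm_transport_sub_one_add_integral_le {A N : ℝ → R} (hA : ContinuousOn A (Icc a b))
    (hN : Continuous N) (hab : a ≤ b) (hmul : ∀ s t, N s * N t = 0) {K ε : ℝ} (hε₀ : 0 ≤ ε)
    (hAK : ∀ t ∈ Icc a b, ‖A t‖ ≤ K) (hNK : ∀ t ∈ Icc a b, ‖N t‖ ≤ K)
    (hε : ∀ t ∈ Icc a b, ‖A t - N t‖ ≤ ε) :
    ‖transport A a b - (1 + ∫ t in a..b, N t)‖ ≤
      ε * (‖(1 : R)‖ + K * (b - a)) * (b - a) * exp (K * (b - a)) := by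
  have hK₀ : 0 ≤ K := (norm_nonneg _).trans (hNK a ⟨le_rfl, hab⟩)
  have hderiv : ∀ t, HasDerivAt (fun t => 1 + ∫ s in a..t, N s) (N t) t := fun t =>
    (hN.integral_hasStrictDerivAt a t).hasDerivAt.const_add 1
  have hfix : ∀ t, N t * (1 + ∫ s in a..t, N s) = N t := fun t => by
    have h := (ContinuousLinearMap.mul ℝ R (N t)).intervalIntegral_comp_comm
      (hN.intervalIntegrable (μ := MeasureTheory.volume) a t)
    simp only [ContinuousLinearMap.mul_apply', hmul, intervalIntegral.integral_zero] at h
    rw [mul_add, mul_one, ← h, add_zero]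
  have hbound : ∀ t ∈ Icc a b, ‖1 + ∫ s in a..t, N s‖ ≤ ‖(1 : R)‖ + K * (b - a) := fun t ht => by
    refine (norm_add_le _ _).trans (add_le_add_right ?_ _)
    refine (intervalIntegral.norm_integral_le_of_norm_le_const (C := K) fun s hs => ?_).trans ?_
    · rw [uIoc_of_le ht.1] at hs
      exact hNK s ⟨hs.1.le, hs.2.trans ht.2⟩
    · rw [abs_of_nonneg (sub_nonneg.2 ht.1)]
      gcongr
      exact ht.2
  have h := norm_sub_transport_mul_le hA hab (Ψ := fun t => 1 + ∫ s in a..t, N s)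
    (HasDerivAt.continuousOn fun t _ => hderiv t) (fun t _ => (hderiv t).hasDerivWithinAt) hAK
    (ε := ε * (‖(1 : R)‖ + K * (b - a)))
    (mul_nonneg hε₀ ((norm_nonneg _).trans (hbound a ⟨le_rfl, hab⟩))) fun t ht => ?_
  · simpa [norm_sub_rev] using h
  · have ht' : t ∈ Icc a b := ⟨ht.1, ht.2.le⟩
    calc ‖N t - A t * (1 + ∫ s in a..t, N s)‖ = ‖(N t - A t) * (1 + ∫ s in a..t, N s)‖ := by
          rw [sub_mul, hfix]
      _ ≤ ε * (‖(1 : R)‖ + K * (b - a)) :=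
          norm_mul_le_of_le (by rw [norm_sub_rev]; exact hε t ht') (hbound t ht')

lemma tendsto_transport_of_mul_eq_zero {ι : Type*} {l : Filter ι} {A N : ι → ℝ → R} {Z : R}
    (hab : a ≤ b) (hA : ∀ x, ContinuousOn (A x) (Icc a b)) (hN : ∀ x, Continuous (N x))
    (hmul : ∀ x s t, N x s * N x t = 0) {K ε : ι → ℝ}
    (hAK : ∀ᶠ x in l, ∀ t ∈ Icc a b, ‖A x t‖ ≤ K x) (hNK : ∀ᶠ x in l, ∀ t ∈ Icc a b, ‖N x t‖ ≤ K x)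
    (hε : ∀ᶠ x in l, ∀ t ∈ Icc a b, ‖A x t - N x t‖ ≤ ε x)
    (hlim : Tendsto (fun x => ε x * (‖(1 : R)‖ + K x * (b - a)) * (b - a) * exp (K x * (b - a)))
      l (𝓝 0)) (hZ : Tendsto (fun x => ∫ t in a..b, N x t) l (𝓝 Z)) :
    Tendsto (fun x => transport (A x) a b) l (𝓝 (1 + Z)) := by
  have hsub : Tendsto (fun x => transport (A x) a b - (1 + ∫ t in a..b, N x t)) l (𝓝 0) := by
    refine squeeze_zero_norm' ?_ hlim
    filter_upwards [hAK, hNK, hε] with x hx₁ hx₂ hx₃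
    exact norm_transport_sub_one_add_integral_le (hA x) (hN x) hab (hmul x)
      ((norm_nonneg _).trans (hx₃ a ⟨le_rfl, hab⟩)) hx₁ hx₂ hx₃
  simpa using hsub.add (hZ.const_add 1)

end Nilpotent

lemma tendsto_exp_neg_mul_mul_sqrt_pow_mul_exp_sqrt {κ : ℝ} (hκ : 0 < κ) (K : ℝ) (n : ℕ) :
    Tendsto (fun x => exp (-κ * x) * (√x ^ n * exp (K * √x))) atTop (𝓝 0) := by
  have h : Tendsto (fun y : ℝ => y ^ n * exp (-1 * y)) atTop (𝓝 0) := by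
    simpa using tendsto_pow_mul_exp_neg_atTop_nhds_zero n
  refine squeeze_zero' (.of_forall fun x => by positivity) ?_ (h.comp tendsto_sqrt_atTop)
  filter_upwards [eventually_ge_atTop 0, tendsto_sqrt_atTop.eventually_ge_atTop ((K + 1) / κ)]
    with x hx hK
  rw [div_le_iff₀ hκ] at hK
  have hle := mul_le_mul_of_nonneg_right hK (sqrt_nonneg x)
  rw [mul_right_comm, mul_self_sqrt hx] at hle
  rw [mul_left_comm, ← exp_add]
  dsimp only [Function.comp_apply]
  gcongr
  linarith

lemma tendsto_sqrt_mul_exp_neg_mul_mul_exp_sqrt {κ : ℝ} (hκ : 0 < κ) (c K L : ℝ) :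
    Tendsto (fun x => √x * exp (-κ * x) * K * (c + √x * K * L) * L * exp (√x * K * L))
      atTop (𝓝 0) := by
  have h₁ := (tendsto_exp_neg_mul_mul_sqrt_pow_mul_exp_sqrt hκ (K * L) 1).const_mul (K * c * L)
  have h₂ := (tendsto_exp_neg_mul_mul_sqrt_pow_mul_exp_sqrt hκ (K * L) 2).const_mul (K ^ 2 * L ^ 2)
  have h := h₁.add h₂
  rw [mul_zero, mul_zero, add_zero] at h
  refine h.congr fun x => ?_
  rw [show √x * K * L = K * L * √x by ring]
  ring

section StokesLimit

attribute [local instance] Matrix.linftyOpNormedRing Matrix.linftyOpNormedAlgebra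

lemma norm_le_card_mul_of_abs_le {n : Type*} [Fintype n] [DecidableEq n] {M : Matrix n n ℝ} {ε : ℝ}
    (hε : 0 ≤ ε) (hM : ∀ i j, |M i j| ≤ ε) : ‖M‖ ≤ Fintype.card n * ε := by
  lift ε to NNReal using hε
  rw [Matrix.linfty_opNorm_def]
  norm_cast
  refine Finset.sup_le fun i _ => (Finset.sum_le_card_nsmul _ _ ε fun j _ => ?_).trans_eq ?_
  · exact hM i j
  · rw [Finset.card_univ, nsmul_eq_mul]

/-- The entries of `stokesConnection` that do not decay along a decaying solution. -/
def stokesNilpotent (f h : ℝ) : Matrix (Fin 4) (Fin 4) ℝ :=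
  !![0, 0, 0, 0; f, 0, 0, 0; h, 0, 0, -f; 0, 0, 0, 0]

lemma stokesNilpotent_mul (f h f' h' : ℝ) : stokesNilpotent f h * stokesNilpotent f' h' = 0 := by
  ext i j
  rw [Matrix.mul_apply, Fin.sum_univ_four]
  fin_cases i <;> fin_cases j <;> simp [stokesNilpotent]

lemma stokesNilpotent_eq (f h : ℝ) :
    stokesNilpotent f h = f • stokesNilpotent 1 0 + h • stokesNilpotent 0 1 := by
  ext i j
  fin_cases i <;> fin_cases j <;> simp [stokesNilpotent]

lemma continuous_stokesNilpotent {X : Type*} [TopologicalSpace X] {f h : X → ℝ} (hf : Continuous f)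
    (hh : Continuous h) : Continuous fun x => stokesNilpotent (f x) (h x) := by
  refine continuous_matrix fun i j => ?_
  fin_cases i <;> fin_cases j <;> simp [stokesNilpotent] <;> fun_prop

lemma integral_stokesNilpotent {f h : ℝ → ℝ} (hf : Continuous f) (hh : Continuous h) (a b : ℝ) :
    ∫ t in a..b, stokesNilpotent (f t) (h t) =
      stokesNilpotent (∫ t in a..b, f t) (∫ t in a..b, h t) := by
  simp only [stokesNilpotent_eq (f _), stokesNilpotent_eq (intervalIntegral _ _ _ _)]
  rw [intervalIntegral.integral_add, intervalIntegral.integral_smul_const,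
    intervalIntegral.integral_smul_const]
  · exact (hf.smul continuous_const).intervalIntegrable _ _
  · exact (hh.smul continuous_const).intervalIntegrable _ _

lemma norm_stokesNilpotent_le {f h ε : ℝ} (hf : |f| ≤ ε) (hh : |h| ≤ ε) :
    ‖stokesNilpotent f h‖ ≤ 4 * ε := by
  have hε : 0 ≤ ε := (abs_nonneg f).trans hf
  refine (norm_le_card_mul_of_abs_le hε fun i j => ?_).trans_eq (by norm_num)
  fin_cases i <;> fin_cases j <;> simpa [stokesNilpotent]

lemma norm_stokesConnection_le {F H : ℝ → ℝ} {b ε : ℝ} (hb : 2 * |b| ≤ ε)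
    (hF : ∀ θ, |θ| ≤ 1 → |F θ| ≤ ε) (hH : ∀ θ, |θ| ≤ 1 → |H θ| ≤ ε) (t : ℝ) :
    ‖stokesConnection F H b t‖ ≤ 4 * ε := by
  have hε : 0 ≤ ε := by linarith [abs_nonneg b]
  have hdiag : ∀ θ, |θ| ≤ 1 → 2 * |b| * |θ| ≤ ε := fun θ hθ =>
    (mul_le_of_le_one_right (by positivity) hθ).trans hb
  refine (norm_le_card_mul_of_abs_le hε fun i j => ?_).trans_eq (by norm_num)
  fin_cases i <;> fin_cases j <;> simp [stokesConnection] <;>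
    (first | apply hdiag | apply hF | apply hH) <;> simp [abs_sin_le_one, abs_cos_le_one]

lemma cos_le_cos_pi_div_eight {s : ℝ} (h₁ : π / 8 ≤ s) (h₂ : s ≤ 15 * π / 8) :
    cos s ≤ cos (π / 8) := by
  rw [← neg_le_neg_iff, ← cos_pi_sub, ← cos_pi_sub, ← cos_abs (π - s)]
  exact cos_le_cos_of_nonneg_of_le_pi (abs_nonneg _) (by linarith [pi_pos])
    (abs_le.2 ⟨by linarith, by linarith⟩)

lemma norm_stokesConnection_sub_stokesNilpotent_le {F H : ℝ → ℝ} {b ε t : ℝ} (hb : 2 * |b| ≤ ε)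
    (hF : ∀ θ, |θ| ≤ 1 → θ ≤ cos (π / 8) → |F θ| ≤ ε)
    (hH : ∀ θ, |θ| ≤ 1 → θ ≤ cos (π / 8) → |H θ| ≤ ε) (ht : t ∈ Icc (-(π / 8)) (3 * π / 8)) :
    ‖stokesConnection F H b t - stokesNilpotent (F (cos (t - π / 4))) (H (cos t))‖ ≤ 4 * ε := by
  have hε : 0 ≤ ε := by linarith [abs_nonneg b]
  have hdiag : ∀ θ, |θ| ≤ 1 → 2 * |b| * |θ| ≤ ε := fun θ hθ =>
    (mul_le_of_le_one_right (by positivity) hθ).trans hb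
  obtain ⟨ht₁, ht₂⟩ := ht
  have hsin : sin t ≤ cos (π / 8) := by
    rw [← cos_pi_div_two_sub]
    apply cos_le_cos_pi_div_eight <;> linarith
  have hneg_sin : -sin t ≤ cos (π / 8) := by
    rw [← cos_add_pi_div_two]
    apply cos_le_cos_pi_div_eight <;> linarith
  have hcos_add : cos (t + π / 4) ≤ cos (π / 8) := by
    apply cos_le_cos_pi_div_eight <;> linarith
  have hneg_cos_add : -cos (t + π / 4) ≤ cos (π / 8) := by
    rw [← cos_add_pi]
    apply cos_le_cos_pi_div_eight <;> linarith
  have hneg_cos : -cos t ≤ cos (π / 8) := by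
    rw [← cos_add_pi]
    apply cos_le_cos_pi_div_eight <;> linarith
  have hneg_cos_sub : -cos (t - π / 4) ≤ cos (π / 8) := by
    rw [← cos_add_pi]
    apply cos_le_cos_pi_div_eight <;> linarith
  refine (norm_le_card_mul_of_abs_le hε fun i j => ?_).trans_eq (by norm_num)
  fin_cases i <;> fin_cases j <;> simp [stokesConnection, stokesNilpotent, hε] <;>
    (first | apply hdiag | apply hF | apply hH) <;>
    first | assumption | simp [abs_sin_le_one, abs_cos_le_one]

lemma tendsto_integral_stokesNilpotent {p q v w : ℝ → ℝ} {p₀ q₀ v₀ w₀ : ℝ}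
    (hp : Tendsto p atTop (𝓝 p₀)) (hq : Tendsto q atTop (𝓝 q₀)) (hv : Tendsto v atTop (𝓝 v₀))
    (hw : Tendsto w atTop (𝓝 w₀)) :
    Tendsto (fun x => ∫ t in -(π / 8)..3 * π / 8, stokesNilpotent
        (boundaryLayer (2 * √2) x (p x) (q x) (cos (t - π / 4)))
        (boundaryLayer 4 x (v x) (w x) (cos t))) atTop
      (𝓝 (stokesNilpotent (√(2 * π / (2 * √2)) * (p₀ + q₀)) (√(2 * π / 4) * (v₀ + w₀)))) := by
  have hπ := pi_pos
  have hF := tendsto_integral_boundaryLayer (k := 2 * √2) (a := -(π / 8)) (b := 3 * π / 8)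
    (c := π / 4) (by positivity) (by linarith) (by linarith) (by linarith) (by linarith) hp hq
  have hH := tendsto_integral_boundaryLayer (k := 4) (a := -(π / 8)) (b := 3 * π / 8)
    (c := 0) (by positivity) (by linarith) (by linarith) (by linarith) (by linarith) hv hw
  simp only [sub_zero] at hH
  have hcont := continuous_stokesNilpotent continuous_fst continuous_snd
  refine ((hcont.tendsto _).comp (hF.prodMk_nhds hH)).congr fun x => ?_
  exact (integral_stokesNilpotent ((continuous_boundaryLayer _ _ _ _).comp (by fun_prop))
    ((continuous_boundaryLayer _ _ _ _).comp continuous_cos) _ _).symm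

section Bounds

variable {x p q v w l C : ℝ}

lemma norm_stokesConnection_boundaryLayer_le (hx : 0 ≤ x) (hpq : |p| + |q| ≤ C)
    (hvw : |v| + |w| ≤ C) (hl : 2 * |l| ≤ C) (t : ℝ) :
    ‖stokesConnection (boundaryLayer (2 * √2) x p q) (boundaryLayer 4 x v w)
      (√x * exp (-4 * x) * l) t‖ ≤ √x * (4 * C) := by
  have hexp : exp (-4 * x) ≤ 1 := exp_le_one_iff.2 (by linarith)
  refine (norm_stokesConnection_le (ε := √x * C) ?_
    (fun θ hθ => abs_boundaryLayer_le_sqrt_mul (by positivity) hx hθ hpq)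
    (fun θ hθ => abs_boundaryLayer_le_sqrt_mul (by positivity) hx hθ hvw) t).trans_eq (by ring)
  rw [abs_mul, abs_of_nonneg (by positivity)]
  calc 2 * (√x * exp (-4 * x) * |l|) ≤ 2 * (√x * 1 * |l|) := by gcongr
    _ = √x * (2 * |l|) := by ring
    _ ≤ √x * C := by gcongr

lemma norm_stokesNilpotent_boundaryLayer_le (hx : 0 ≤ x) (hpq : |p| + |q| ≤ C)
    (hvw : |v| + |w| ≤ C) (t : ℝ) :
    ‖stokesNilpotent (boundaryLayer (2 * √2) x p q (cos (t - π / 4)))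
      (boundaryLayer 4 x v w (cos t))‖ ≤ √x * (4 * C) :=
  (norm_stokesNilpotent_le
    (abs_boundaryLayer_le_sqrt_mul (by positivity) hx (abs_cos_le_one _) hpq)
    (abs_boundaryLayer_le_sqrt_mul (by positivity) hx (abs_cos_le_one _) hvw)).trans_eq (by ring)

lemma norm_stokesConnection_boundaryLayer_sub_le (hx : 0 ≤ x) (hpq : |p| + |q| ≤ C)
    (hvw : |v| + |w| ≤ C) (hl : 2 * |l| ≤ C) {t : ℝ} (ht : t ∈ Icc (-(π / 8)) (3 * π / 8)) :
    ‖stokesConnection (boundaryLayer (2 * √2) x p q) (boundaryLayer 4 x v w)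
        (√x * exp (-4 * x) * l) t -
      stokesNilpotent (boundaryLayer (2 * √2) x p q (cos (t - π / 4)))
        (boundaryLayer 4 x v w (cos t))‖ ≤
      √x * exp (-(2 * (1 - cos (π / 8))) * x) * (4 * C) := by
  have hcos : -1 ≤ cos (π / 8) ∧ cos (π / 8) ≤ 1 := ⟨neg_one_le_cos _, cos_le_one _⟩
  refine (norm_stokesConnection_sub_stokesNilpotent_le
    (ε := √x * exp (-(2 * (1 - cos (π / 8))) * x) * C) ?_ (fun θ hθ hle => ?_)
    (fun θ hθ hle => ?_) ht).trans_eq (by ring)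
  · rw [abs_mul, abs_of_nonneg (by positivity)]
    calc 2 * (√x * exp (-4 * x) * |l|) = √x * exp (-4 * x) * (2 * |l|) := by ring
      _ ≤ √x * exp (-(2 * (1 - cos (π / 8))) * x) * C := by gcongr; linarith
  · refine abs_boundaryLayer_le hx hθ ?_ hpq
    have hk : 2 ≤ 2 * √2 := by linarith [one_le_sqrt.2 (one_le_two (α := ℝ))]
    gcongr ?_ * (1 - ?_)
    linarith
  · refine abs_boundaryLayer_le hx hθ ?_ hvw
    linarith

end Bounds

lemma tendsto_stokesTransport {p q v w l : ℝ → ℝ} {p₀ q₀ v₀ w₀ l₀ : ℝ}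
    (hp : Tendsto p atTop (𝓝 p₀)) (hq : Tendsto q atTop (𝓝 q₀)) (hv : Tendsto v atTop (𝓝 v₀))
    (hw : Tendsto w atTop (𝓝 w₀)) (hl : Tendsto l atTop (𝓝 l₀)) :
    Tendsto (fun x => stokesTransport (boundaryLayer (2 * √2) x (p x) (q x))
        (boundaryLayer 4 x (v x) (w x)) (√x * exp (-4 * x) * l x)) atTop
      (𝓝 (1 + stokesNilpotent (√(2 * π / (2 * √2)) * (p₀ + q₀)) (√(2 * π / 4) * (v₀ + w₀)))) := by
  have hcos : cos (π / 8) < cos 0 :=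
    cos_lt_cos_of_nonneg_of_le_pi le_rfl (by linarith [pi_pos]) (by positivity)
  have hκ : 0 < 2 * (1 - cos (π / 8)) := by linarith [cos_zero]
  obtain ⟨C, hC⟩ : ∃ C, ∀ᶠ x in atTop, |p x| + |q x| + (|v x| + |w x|) + 2 * |l x| ≤ C :=
    ⟨_, ((hp.abs.add hq.abs).add (hv.abs.add hw.abs)).add (hl.abs.const_mul 2)
      |>.eventually_le_const (lt_add_one _)⟩
  have hbounds : ∀ᶠ x in atTop,
      0 ≤ x ∧ |p x| + |q x| ≤ C ∧ |v x| + |w x| ≤ C ∧ 2 * |l x| ≤ C := by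
    filter_upwards [hC, eventually_ge_atTop 0] with x hx hx₀
    refine ⟨hx₀, ?_, ?_, ?_⟩ <;> linarith [abs_nonneg (p x), abs_nonneg (q x), abs_nonneg (v x),
      abs_nonneg (w x), abs_nonneg (l x)]
  have hcont := continuous_boundaryLayer
  exact tendsto_transport_of_mul_eq_zero neg_pi_div_eight_le
    (fun x => (continuous_stokesConnection (hcont ..) (hcont ..) _).continuousOn)
    (fun x => continuous_stokesNilpotent ((hcont ..).comp (by fun_prop))
      ((hcont ..).comp continuous_cos))
    (fun x s t => stokesNilpotent_mul _ _ _ _)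
    (hbounds.mono fun x ⟨hx, hpq, hvw, hl⟩ t _ =>
      norm_stokesConnection_boundaryLayer_le hx hpq hvw hl t)
    (hbounds.mono fun x ⟨hx, hpq, hvw, _⟩ t _ =>
      norm_stokesNilpotent_boundaryLayer_le hx hpq hvw t)
    (hbounds.mono fun x ⟨hx, hpq, hvw, hl⟩ t ht =>
      norm_stokesConnection_boundaryLayer_sub_le hx hpq hvw hl ht)
    (tendsto_sqrt_mul_exp_neg_mul_mul_exp_sqrt hκ _ (4 * C) _)
    (tendsto_integral_stokesNilpotent hp hq hv hw)

end StokesLimit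

/-! ### The connection formula -/

section StokesData

attribute [local instance] Matrix.linftyOpNormedRing Matrix.linftyOpNormedAlgebra

lemma signedCycle_mul_one_add_stokesNilpotent (f h : ℝ) :
    signedCycle * (1 + stokesNilpotent f h) =
      !![0, 0, 0, -1; 1, 0, 0, 0; f, 1, 0, 0; h, 0, 1, -f] := by
  ext i j
  rw [Matrix.mul_apply, Fin.sum_univ_four]
  fin_cases i <;> fin_cases j <;> simp [signedCycle, stokesNilpotent]

lemma trace_signedCycle_mul_one_add_stokesNilpotent (f h : ℝ) :
    (signedCycle * (1 + stokesNilpotent f h)).trace = -f := by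
  simp [signedCycle_mul_one_add_stokesNilpotent, Matrix.trace, Fin.sum_univ_four]

lemma trace_signedCycle_mul_one_add_stokesNilpotent_mul_self (f h : ℝ) :
    (signedCycle * (1 + stokesNilpotent f h) * (signedCycle * (1 + stokesNilpotent f h))).trace =
      f ^ 2 - 2 * h := by
  simp [signedCycle_mul_one_add_stokesNilpotent, Matrix.trace, Fin.sum_univ_four]
  ring

/-- The arguments of `holonomy` for which the entries of `stokesConnection` are boundary layers with
coefficients `p, q` at the rate `2√2` and `v, w` at the rate `4`. -/
noncomputable def layerCoefficients (x p q v w l : ℝ) : Fin 5 → ℝ :=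
  ![√2 * (√x * exp (-(2 * √2) * x) * p) + √x * exp (-4 * x) * v,
    √2 * (√x * exp (-(2 * √2) * x) * p) - √x * exp (-4 * x) * v,
    x + √x * exp (-4 * x) * (l + w / 2),
    x + √x * exp (-4 * x) * (l - w / 2) + √x * exp (-(2 * √2) * x) * q,
    x + √x * exp (-4 * x) * (l - w / 2) - √x * exp (-(2 * √2) * x) * q]

lemma boundaryLayer_eq (k x α β : ℝ) : boundaryLayer k x α β = fun θ =>
    exp (k * x * θ) * (√x * exp (-k * x) * α + √x * exp (-k * x) * β * θ) := by
  ext θ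
  rw [boundaryLayer, show k * x * (θ - 1) = k * x * θ + -k * x by ring, exp_add]
  ring

lemma semiconjBy_gauge_holonomy_layerCoefficients (x p q v w l : ℝ) :
    SemiconjBy (gauge x (-(π / 8))) (holonomy (layerCoefficients x p q v w l))
      (signedCycle * stokesTransport (boundaryLayer (2 * √2) x p q) (boundaryLayer 4 x v w)
        (√x * exp (-4 * x) * l)) := by
  have h := semiconjBy_gauge_holonomy (√x * exp (-(2 * √2) * x) * p) (√x * exp (-(2 * √2) * x) * q)
    (√x * exp (-4 * x) * v) (√x * exp (-4 * x) * w) (x + √x * exp (-4 * x) * l) x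
  rw [boundaryLayer_eq, boundaryLayer_eq]
  convert h using 2
  · rw [layerCoefficients]
    ring_nf
  · ring_nf

lemma tendsto_trace_holonomy_layerCoefficients {p q v w l : ℝ → ℝ} {p₀ q₀ v₀ w₀ l₀ : ℝ}
    (hp : Tendsto p atTop (𝓝 p₀)) (hq : Tendsto q atTop (𝓝 q₀)) (hv : Tendsto v atTop (𝓝 v₀))
    (hw : Tendsto w atTop (𝓝 w₀)) (hl : Tendsto l atTop (𝓝 l₀)) :
    Tendsto (fun x => (holonomy (layerCoefficients x (p x) (q x) (v x) (w x) (l x))).trace) atTop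
        (𝓝 (-(√(2 * π / (2 * √2)) * (p₀ + q₀)))) ∧
      Tendsto (fun x => (holonomy (layerCoefficients x (p x) (q x) (v x) (w x) (l x)) *
          holonomy (layerCoefficients x (p x) (q x) (v x) (w x) (l x))).trace) atTop
        (𝓝 ((√(2 * π / (2 * √2)) * (p₀ + q₀)) ^ 2 - 2 * (√(2 * π / 4) * (v₀ + w₀)))) := by
  have hT := (tendsto_stokesTransport hp hq hv hw hl).const_mul signedCycle
  have htrace : Continuous fun M : Matrix (Fin 4) (Fin 4) ℝ => M.trace := continuous_id.matrix_trace
  have h₁ := (htrace.tendsto _).comp hT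
  have h₂ := (htrace.tendsto _).comp (hT.mul hT)
  rw [trace_signedCycle_mul_one_add_stokesNilpotent] at h₁
  rw [trace_signedCycle_mul_one_add_stokesNilpotent_mul_self] at h₂
  have hsemi := fun x =>
    semiconjBy_gauge_holonomy_layerCoefficients x (p x) (q x) (v x) (w x) (l x)
  exact ⟨h₁.congr fun x => (trace_eq_of_semiconjBy (isUnit_gauge _ _) (hsemi x)).symm,
    h₂.congr fun x =>
      (trace_eq_of_semiconjBy (isUnit_gauge _ _) ((hsemi x).mul_right (hsemi x))).symm⟩

lemma sqrt_mul_exp_neg_mul_sqrt_mul_exp {x : ℝ} (hx : 0 ≤ x) (k y : ℝ) :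
    √x * exp (-k * x) * (√x * exp (k * x) * y) = x * y := by
  have hexp : exp (-k * x) * exp (k * x) = 1 := by rw [← exp_add]; simp
  calc √x * exp (-k * x) * (√x * exp (k * x) * y)
      = √x * √x * (exp (-k * x) * exp (k * x)) * y := by ring
    _ = x * y := by rw [hexp, mul_self_sqrt hx, mul_one]

lemma coefficients_eq_layerCoefficients {x : ℝ} (hx : 0 ≤ x) (w₀ w₀' w₁ w₁' : ℝ → ℝ) :
    coefficients w₀ w₀' w₁ w₁' x = layerCoefficients x
      (√2 / 4 * (√x * exp (2 * √2 * x) * (w₀' x + w₁' x)))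
      (-(exp (w₀ x - w₁ x) * (√x * exp (2 * √2 * x) * sinh (w₀ x + w₁ x))))
      (1 / 2 * (√x * exp (4 * x) * (w₀' x - w₁' x)))
      (-(2 * (√x * exp (4 * x) * sinh (w₀ x - w₁ x)) +
        exp (w₀ x - w₁ x) * (√x * exp (4 * x) * (cosh (w₀ x + w₁ x) - 1))))
      (√x * exp (4 * x) * (cosh (w₀ x - w₁ x) - 1) +
        1 / 2 * (exp (w₀ x - w₁ x) * (√x * exp (4 * x) * (cosh (w₀ x + w₁ x) - 1)))) := by
  have h₁ := sqrt_mul_exp_neg_mul_sqrt_mul_exp hx (2 * √2)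
  have h₂ := sqrt_mul_exp_neg_mul_sqrt_mul_exp hx 4
  have hsq : √2 * √2 = 2 := mul_self_sqrt zero_le_two
  have hexp₀ : exp (2 * w₀ x) =
      exp (w₀ x - w₁ x) * (cosh (w₀ x + w₁ x) + sinh (w₀ x + w₁ x)) := by
    rw [cosh_add_sinh, ← exp_add]
    ring_nf
  have hexp₁ : exp (-(2 * w₁ x)) =
      exp (w₀ x - w₁ x) * (cosh (w₀ x + w₁ x) - sinh (w₀ x + w₁ x)) := by
    rw [cosh_sub_sinh, ← exp_add]
    ring_nf
  have hexp₂ : exp (w₁ x - w₀ x) = cosh (w₀ x - w₁ x) - sinh (w₀ x - w₁ x) := by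
    rw [cosh_sub_sinh, neg_sub]
  have hsum := h₁ (w₀' x + w₁' x)
  have hsub := h₂ (w₀' x - w₁' x)
  have hsinh := h₁ (sinh (w₀ x + w₁ x))
  have hdiff := h₂ (cosh (w₀ x - w₁ x) - sinh (w₀ x - w₁ x) - 1)
  have hadd := h₂ (cosh (w₀ x - w₁ x) + sinh (w₀ x - w₁ x) - 1)
  have hcosh := h₂ (cosh (w₀ x + w₁ x) - 1)
  have hexp := cosh_add_sinh (w₀ x - w₁ x)
  ext i
  fin_cases i <;> simp [coefficients, layerCoefficients, -neg_mul]
  · linear_combination -(√2 * √2 / 4) * hsum - hsub / 2 - x * (w₀' x + w₁' x) / 4 * hsq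
  · linear_combination -(√2 * √2 / 4) * hsum + hsub / 2 - x * (w₀' x + w₁' x) / 4 * hsq
  · linear_combination x * hexp₂ - hdiff
  · linear_combination
      x * hexp₁ - hadd - exp (w₀ x - w₁ x) * hcosh + exp (w₀ x - w₁ x) * hsinh - x * hexp
  · linear_combination
      x * hexp₀ - hadd - exp (w₀ x - w₁ x) * hcosh - exp (w₀ x - w₁ x) * hsinh - x * hexp

lemma tendsto_mul_comp_of_hasDerivAt {α : Type*} {l : Filter α} {c u : α → ℝ} {f : ℝ → ℝ}
    {f' C : ℝ} (hf : HasDerivAt f f' 0) (hf₀ : f 0 = 0) (hu : Tendsto u l (𝓝 0))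
    (hc : Tendsto (fun x => c x * u x) l (𝓝 C)) :
    Tendsto (fun x => c x * f (u x)) l (𝓝 (f' * C)) := by
  have hslope : Tendsto (dslope f 0) (𝓝 0) (𝓝 f') := by
    simpa [hf.deriv] using (continuousAt_dslope_same.2 hf.differentiableAt).tendsto
  refine ((hslope.comp hu).mul hc).congr fun x => ?_
  have h := sub_smul_dslope f 0 (u x)
  rw [sub_zero, hf₀, sub_zero, smul_eq_mul] at h
  rw [Function.comp_apply, ← h]
  ring

lemma tendsto_sqrt_mul_exp_mul_cosh_sub_one {u : ℝ → ℝ} {A : ℝ} (hu : Tendsto u atTop (𝓝 0))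
    (hA : Tendsto (fun x => √x * exp (2 * √2 * x) * u x) atTop (𝓝 A)) :
    Tendsto (fun x => √x * exp (4 * x) * (cosh (u x) - 1)) atTop (𝓝 0) := by
  have hsinh : HasDerivAt (fun y => sinh (y / 2)) (1 / 2) 0 := by
    simpa using ((hasDerivAt_id 0).div_const 2).sinh
  have hhalf := tendsto_mul_comp_of_hasDerivAt hsinh (by simp) hu hA
  have hexp : Tendsto (fun x => exp ((4 - 4 * √2) * x)) atTop (𝓝 0) :=
    tendsto_exp_atBot.comp (tendsto_id.const_mul_atTop_of_neg
      (by linarith [one_lt_sqrt_two]))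
  have h := ((hhalf.mul hhalf).mul hexp).mul (tendsto_inv_atTop_zero.comp tendsto_sqrt_atTop)
  have hdouble := h.const_mul 2
  rw [mul_zero, mul_zero] at hdouble
  refine hdouble.congr' ((eventually_gt_atTop 0).mono fun x hx => ?_)
  have hcosh : cosh (u x) - 1 = 2 * sinh (u x / 2) ^ 2 := by
    have htwo := cosh_two_mul (u x / 2)
    rw [mul_div_cancel₀ _ two_ne_zero, cosh_sq] at htwo
    linarith
  have hmul : exp (4 * x) = exp (2 * √2 * x) * exp (2 * √2 * x) * exp ((4 - 4 * √2) * x) := by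
    simp only [← exp_add]
    ring_nf
  have hsqrt : √x ≠ 0 := (sqrt_pos.2 hx).ne'
  simp only [Function.comp_apply, hcosh, hmul]
  field_simp

section Relations

variable {w₀ w₀' w₁ w₁' : ℝ → ℝ} {A B : ℝ}

lemma tendsto_trace_holonomy_coefficients
    (h₀ : Tendsto w₀ atTop (𝓝 0)) (h₁ : Tendsto w₁ atTop (𝓝 0))
    (hA : Tendsto (fun r => √r * exp (2 * √2 * r) * (w₀ r + w₁ r)) atTop (𝓝 A))
    (hA' : Tendsto (fun r => √r * exp (2 * √2 * r) * (w₀' r + w₁' r)) atTop (𝓝 (-(2 * √2) * A)))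
    (hB : Tendsto (fun r => √r * exp (4 * r) * (w₀ r - w₁ r)) atTop (𝓝 B))
    (hB' : Tendsto (fun r => √r * exp (4 * r) * (w₀' r - w₁' r)) atTop (𝓝 (-4 * B))) :
    Tendsto (fun x => (holonomy (coefficients w₀ w₀' w₁ w₁' x)).trace) atTop
        (𝓝 (2 * A * √(2 * π / (2 * √2)))) ∧
      Tendsto (fun x => (holonomy (coefficients w₀ w₀' w₁ w₁' x) *
          holonomy (coefficients w₀ w₀' w₁ w₁' x)).trace) atTop
        (𝓝 ((2 * A * √(2 * π / (2 * √2))) ^ 2 + 8 * B * √(2 * π / 4))) := by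
  have hu : Tendsto (fun r => w₀ r + w₁ r) atTop (𝓝 0) := by simpa using h₀.add h₁
  have hv : Tendsto (fun r => w₀ r - w₁ r) atTop (𝓝 0) := by simpa using h₀.sub h₁
  have hexp : Tendsto (fun r => exp (w₀ r - w₁ r)) atTop (𝓝 1) := by simpa using hv.rexp
  have hsinh : HasDerivAt sinh 1 0 := by simpa using hasDerivAt_sinh 0
  have hcosh : HasDerivAt (fun y => cosh y - 1) 0 0 := by
    simpa using (hasDerivAt_cosh 0).sub_const 1
  have hcoshu := hexp.mul (tendsto_sqrt_mul_exp_mul_cosh_sub_one hu hA)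
  have hcoshv := tendsto_mul_comp_of_hasDerivAt hcosh (by simp) hv hB
  have hsinhu := hexp.mul (tendsto_mul_comp_of_hasDerivAt hsinh sinh_zero hu hA)
  have hsinhv := tendsto_mul_comp_of_hasDerivAt hsinh sinh_zero hv hB
  have hl := hcoshv.add (hcoshu.const_mul (1 / 2))
  rw [zero_mul, mul_zero, mul_zero, add_zero] at hl
  have h := tendsto_trace_holonomy_layerCoefficients (hA'.const_mul (√2 / 4)) hsinhu.neg
    (hB'.const_mul (1 / 2)) ((hsinhv.const_mul 2).add hcoshu).neg hl
  have heq : ∀ᶠ x in atTop, _ = coefficients w₀ w₀' w₁ w₁' x :=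
    (eventually_ge_atTop 0).mono fun x hx => (coefficients_eq_layerCoefficients hx _ _ _ _).symm
  have hsq : √2 * √2 = 2 := mul_self_sqrt zero_le_two
  have hp : √2 / 4 * (-(2 * √2) * A) = -A := by linear_combination -(A / 2) * hsq
  rw [hp] at h
  constructor
  · convert h.1.congr' (heq.mono fun x hx => by rw [hx]) using 2
    ring
  · convert h.2.congr' (heq.mono fun x hx => by rw [hx]) using 2
    ring

theorem IsSolution.tendsto_sqrt_mul_exp_mul_atTop (H : IsSolution w₀ w₀' w₁ w₁') {γ₀ γ₁ : ℝ}
    (hγ₀ : -1 < γ₀) (hγ₁ : γ₁ < 1) (hγ : γ₀ - 2 < γ₁)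
    (hzero₀ : Tendsto (fun r => 2 * w₀ r / log r) (𝓝[>] 0) (𝓝 γ₀))
    (hzero₁ : Tendsto (fun r => 2 * w₁ r / log r) (𝓝[>] 0) (𝓝 γ₁))
    (h₀ : Tendsto w₀ atTop (𝓝 0)) (h₁ : Tendsto w₁ atTop (𝓝 0)) :
    Tendsto (fun r => √r * exp (2 * √2 * r) * (w₀ r + w₁ r)) atTop
        (𝓝 ((cos (π * (γ₀ + 1) / 4) + cos (π * (γ₁ + 3) / 4)) / √(2 * π / (2 * √2)))) ∧
      Tendsto (fun r => √r * exp (4 * r) * (w₀ r - w₁ r)) atTop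
        (𝓝 (-(1 + 2 * cos (π * (γ₀ + 1) / 4) * cos (π * (γ₁ + 3) / 4)) /
          (2 * √(2 * π / 4)))) := by
  obtain ⟨⟨A, hA, hA'⟩, B, hB, hB'⟩ := H.exists_tendsto_atTop h₀ h₁
  obtain ⟨htrace, htrace_sq⟩ := tendsto_trace_holonomy_coefficients h₀ h₁ hA hA' hB hB'
  have hconst := fun x (hx : 0 < x) => H.trace_holonomy hγ₀ hγ₁ hγ hzero₀ hzero₁ hx
  have hconn₁ := tendsto_nhds_unique htrace (tendsto_const_nhds.congr'
    ((eventually_gt_atTop 0).mono fun x hx => (hconst x hx).1.symm))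
  have hconn₂ := tendsto_nhds_unique htrace_sq (tendsto_const_nhds.congr'
    ((eventually_gt_atTop 0).mono fun x hx => (hconst x hx).2.symm))
  rw [hconn₁] at hconn₂
  have hAeq : A = (cos (π * (γ₀ + 1) / 4) + cos (π * (γ₁ + 3) / 4)) / √(2 * π / (2 * √2)) :=
    (eq_div_iff (by positivity)).2 (by linear_combination hconn₁ / 2)
  have hBeq : B = -(1 + 2 * cos (π * (γ₀ + 1) / 4) * cos (π * (γ₁ + 3) / 4)) /
      (2 * √(2 * π / 4)) :=
    (eq_div_iff (by positivity)).2 (by linear_combination hconn₂ / 4)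
  exact ⟨hAeq ▸ hA, hBeq ▸ hB⟩

end Relations

end StokesData

lemma HasRadialLaplacian.of_contDiffOn {z f : ℝ → ℝ} (hz : ContDiffOn ℝ 2 z (Ioi 0))
    (h : ∀ r > 0, deriv (deriv z) r + deriv z r / r = f r) :
    HasRadialLaplacian z (deriv z) f where
  hasDerivAt r hr :=
    ((hz.differentiableOn two_ne_zero).differentiableAt (Ioi_mem_nhds hr)).hasDerivAt
  hasDerivAt_deriv r hr := by
    have hderiv : ContDiffOn ℝ 1 (deriv z) (Ioi 0) :=
      hz.deriv_of_isOpen isOpen_Ioi one_add_one_eq_two.le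
    rw [← h r hr, add_sub_cancel_right]
    exact ((hderiv.differentiableOn one_ne_zero).differentiableAt (Ioi_mem_nhds hr)).hasDerivAt

lemma isSolution_of_isRadialTTStar {w₀ w₁ : ℝ → ℝ} (hsmooth₀ : ContDiffOn ℝ 2 w₀ (Ioi 0))
    (hsmooth₁ : ContDiffOn ℝ 2 w₁ (Ioi 0)) (hsol : IsRadialTTStar w₀ w₁) :
    IsSolution w₀ (deriv w₀) w₁ (deriv w₁) where
  laplacian₀ := .of_contDiffOn hsmooth₀ fun r hr => by
    rw [← (hsol r hr).1]
    field_simp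
  laplacian₁ := .of_contDiffOn hsmooth₁ fun r hr => by
    rw [← (hsol r hr).2]
    field_simp

lemma two_rpow_three_quarters_mul_sqrt_pi :
    (2 : ℝ) ^ ((3 : ℝ) / 4) * √π = 2 * √(2 * π / (2 * √2)) := by
  have hpow : ((2 : ℝ) ^ ((3 : ℝ) / 4)) ^ 2 = 2 * √2 := by
    rw [← rpow_natCast, ← rpow_mul zero_le_two, sqrt_eq_rpow, ← rpow_one_add' zero_le_two] <;>
      norm_num
  have hsq : √2 ^ 2 = 2 := sq_sqrt zero_le_two
  refine (pow_left_inj₀ (by positivity) (by positivity) two_ne_zero).1 ?_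
  rw [mul_pow, mul_pow, hpow, sq_sqrt pi_pos.le, sq_sqrt (by positivity)]
  field_simp
  linear_combination hsq

lemma two_rpow_three_halves_mul_sqrt_pi :
    (2 : ℝ) ^ ((3 : ℝ) / 2) * √π = 4 * √(2 * π / 4) := by
  have hpow : ((2 : ℝ) ^ ((3 : ℝ) / 2)) ^ 2 = 8 := by
    rw [← rpow_natCast, ← rpow_mul zero_le_two]
    norm_num
  refine (pow_left_inj₀ (by positivity) (by positivity) two_ne_zero).1 ?_
  rw [mul_pow, mul_pow, hpow, sq_sqrt pi_pos.le, sq_sqrt (by positivity)]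
  ring

end RadialTTStar

/-- Stokes asymptotics at `r = ∞`: for a smooth solution of the radial tt* system (case 4a)
with asymptotic data `(γ0, γ1)` in the open triangle,
`(w0 + w1)·2^{3/4}·(π r)^{1/2}·e^{2√2 r} → −s1` and
`(w0 − w1)·2^{3/2}·(π r)^{1/2}·e^{4r} → s2` as `r → ∞`, where `(s1, s2)` is given by the
connection formula. -/
theorem stokes_asymptotics_at_infinity (γ0 γ1 : ℝ)
    (hγ0 : -1 < γ0) (hγ1 : γ1 < 1) (hγ : γ1 > γ0 - 2)
    (w0 w1 : ℝ → ℝ)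
    (hsmooth0 : ContDiffOn ℝ (⊤ : ℕ∞) w0 (Set.Ioi 0)) (hsmooth1 : ContDiffOn ℝ (⊤ : ℕ∞) w1 (Set.Ioi 0))
    (hsol : IsRadialTTStar w0 w1)
    (hlim0 : Tendsto w0 atTop (nhds 0)) (hlim1 : Tendsto w1 atTop (nhds 0))
    (hγ0lim : Tendsto (fun r => 2 * w0 r / Real.log r) (nhdsWithin 0 (Set.Ioi 0)) (nhds γ0))
    (hγ1lim : Tendsto (fun r => 2 * w1 r / Real.log r) (nhdsWithin 0 (Set.Ioi 0)) (nhds γ1))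
    (s1 s2 : ℝ)
    (hs1 : s1 = -2 * Real.cos (π * (γ0 + 1) / 4) - 2 * Real.cos (π * (γ1 + 3) / 4))
    (hs2 : s2 = -2 - 4 * Real.cos (π * (γ0 + 1) / 4) * Real.cos (π * (γ1 + 3) / 4)) :
    Tendsto (fun r => (w0 r + w1 r) * (2:ℝ) ^ ((3:ℝ)/4) * Real.sqrt (π * r) *
        Real.exp (2 * Real.sqrt 2 * r)) atTop (nhds (-s1)) ∧
    Tendsto (fun r => (w0 r - w1 r) * (2:ℝ) ^ ((3:ℝ)/2) * Real.sqrt (π * r) *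
        Real.exp (4 * r)) atTop (nhds s2) := by
  have h2 : (2 : WithTop ℕ∞) ≤ (⊤ : ℕ∞) := WithTop.coe_le_coe.2 le_top
  obtain ⟨hadd, hsub⟩ := (RadialTTStar.isSolution_of_isRadialTTStar (hsmooth0.of_le h2)
    (hsmooth1.of_le h2) hsol).tendsto_sqrt_mul_exp_mul_atTop hγ0 hγ1 hγ hγ0lim hγ1lim hlim0 hlim1
  constructor
  · convert hadd.const_mul ((2 : ℝ) ^ ((3 : ℝ) / 4) * √π) using 2 with r
    · rw [sqrt_mul pi_pos.le]
      ring
    · rw [RadialTTStar.two_rpow_three_quarters_mul_sqrt_pi, hs1]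
      field_simp
      ring
  · convert hsub.const_mul ((2 : ℝ) ^ ((3 : ℝ) / 2) * √π) using 2 with r
    · rw [sqrt_mul pi_pos.le]
      ring
    · rw [RadialTTStar.two_rpow_three_halves_mul_sqrt_pi, hs2]
      field_simp
      ring
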